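/- Let B be a Hilbert space (or a reflexive separable Banach space), t > 0, and let C and D be generators of C₀-semigroups exp(sC) and exp(sD) on B. Suppose: (i) D(C) ∩ D(D) is dense in B; (ii) D(C*) ∩ D(D*) is dense in B*; (iii) there exist a ∈ ℝ, M ≥ 1 with ‖(exp((s/n)C) exp((s/n)D))^m‖ ≤ M·exp(a·s·m/n) for all n, m ∈ ℕ, s > 0. Then C + D (with domain D(C) ∩ D(D)) is closable and its closure generates a C₀-semigroup if and only if there exists a dense linear subspace A ⊆ D(C) ∩ D(D) such that for every f ∈ A and s ≥ 0 there is a sequence (f_n) in D(C) ∩ D(D) with: (a) ‖(exp((t/n)C) exp((t/n)D))^{[n s]} f − f_n‖ → 0 as n → ∞; (b) ((C+D) f_n) is a bounded sequence. Moreover, if (a)–(b) hold, then exp(s(closure of C+D)) f = lim_{n→∞} (exp((s/n)C) exp((s/n)D))^n f (limit in norm) for all s > 0 and f ∈ B. -/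

import Mathlib

open Filter Topology MeasureTheory

noncomputable section

variable {B : Type*} [NormedAddCommGroup B] [InnerProductSpace ℝ B] [CompleteSpace B]

/-- `y` is the value of the strong derivative at `0` of `F : [0,∞) → L(B)` at `ψ`. -/
def DerivAtZero (F : ℝ → (B →L[ℝ] B)) (ψ y : B) : Prop :=
  Tendsto (fun h : ℝ => h⁻¹ • (F h ψ - F 0 ψ)) (𝓝[>] (0 : ℝ)) (𝓝 y)

/-- A `C₀`-semigroup on `B` (as a function on `[0,∞)`, modelled on all of `ℝ`). -/
def IsC0Semigroup (S : ℝ → (B →L[ℝ] B)) : Prop :=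
  S 0 = 1 ∧ (∀ a b : ℝ, 0 ≤ a → 0 ≤ b → S (a + b) = S a * S b) ∧
    (∀ x : B, ContinuousOn (fun s => S s x) (Set.Ici (0 : ℝ))) ∧
    ∃ M, 1 ≤ M ∧ ∃ w : ℝ, ∀ s : ℝ, 0 ≤ s → ‖S s‖ ≤ M * Real.exp (w * s)

/-- `Z` is the generator of the semigroup `S`. -/
def IsGeneratorOf (S : ℝ → (B →L[ℝ] B)) (Z : B →ₗ.[ℝ] B) : Prop :=
  ∀ x y : B, DerivAtZero S x y ↔ ∃ hx : x ∈ Z.domain, Z ⟨x, hx⟩ = y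

/-- The approximation condition (a)–(b) for the Trotter product, with boundedness. -/
def TrotterApproxBounded (SC SD : ℝ → (B →L[ℝ] B)) (C D : B →ₗ.[ℝ] B) (t : ℝ) : Prop :=
  ∃ A : Submodule ℝ B, (A : Set B) ⊆ ((C + D).domain : Set B) ∧ Dense (A : Set B) ∧
    ∀ f ∈ A, ∀ s : ℝ, 0 ≤ s → ∃ fs : ℕ → (C + D).domain,
      Tendsto (fun n : ℕ =>
        ‖((SC (t / n) * SD (t / n)) ^ ⌊(n : ℝ) * s⌋₊) f - (fs n : B)‖) atTop (𝓝 0) ∧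
      ∃ R : ℝ, ∀ n : ℕ, ‖(C + D) (fs n)‖ ≤ R


lemma clm_tendsto_zero {X Y : Type*} [NormedAddCommGroup X] [NormedSpace ℝ X]
    [NormedAddCommGroup Y] [NormedSpace ℝ Y] {ι : Type*} {l : Filter ι}
    (T : ι → (X →L[ℝ] Y)) (K : ℝ) (hK : ∀ᶠ i in l, ‖T i‖ ≤ K) (s : Set X) (hs : Dense s)
    (h : ∀ x ∈ s, Tendsto (fun i => T i x) l (𝓝 0)) (x : X) :
    Tendsto (fun i => T i x) l (𝓝 0) := by
  rw [Metric.tendsto_nhds]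
  intro ε hε
  obtain ⟨y, hy, hxy⟩ := Metric.mem_closure_iff.1 (hs x) (ε / (2 * (|K| + 1))) (by positivity)
  filter_upwards [hK, Metric.tendsto_nhds.1 (h y hy) (ε / 2) (by positivity)] with i h1 h2
  rw [dist_zero_right] at h2 ⊢
  have e : T i x = T i (x - y) + T i y := by simp
  rw [dist_eq_norm] at hxy
  have h3 : ‖T i (x - y)‖ ≤ (|K| + 1) * (ε / (2 * (|K| + 1))) := by
    refine ((T i).le_opNorm _).trans ?_
    gcongr
    linarith [le_abs_self K]
  have h4 : (|K| + 1) * (ε / (2 * (|K| + 1))) = ε / 2 := by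
    field_simp
  rw [e]
  calc ‖T i (x - y) + T i y‖ ≤ ‖T i (x - y)‖ + ‖T i y‖ := norm_add_le _ _
    _ < ε := by linarith

lemma sg_bdd {S : ℝ → (B →L[ℝ] B)} (hS : IsC0Semigroup S) (T : ℝ) :
    ∃ K, 0 ≤ K ∧ ∀ s, 0 ≤ s → s ≤ T → ‖S s‖ ≤ K := by
  obtain ⟨-, -, -, M, hM, w, h⟩ := hS
  refine ⟨M * Real.exp (|w| * T), by positivity, fun s h0 hT => (h s h0).trans ?_⟩
  gcongr
  exact le_abs_self w

lemma derivAtZero_iff {S : ℝ → (B →L[ℝ] B)} (hS : IsC0Semigroup S) {x y : B} :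
    DerivAtZero S x y ↔ Tendsto (fun h : ℝ => h⁻¹ • (S h x - x)) (𝓝[>] (0 : ℝ)) (𝓝 y) := by
  unfold DerivAtZero
  simp [hS.1]

lemma sg_comm {S : ℝ → (B →L[ℝ] B)} (hS : IsC0Semigroup S) {r h : ℝ} (hr : 0 ≤ r) (hh : 0 ≤ h)
    (x : B) : S h (S r x) = S r (S h x) := by
  have h1 := hS.2.1 r h hr hh
  have h2 := hS.2.1 h r hh hr
  rw [add_comm, h1] at h2
  have := congrArg (fun T => T x) h2
  simpa using this.symm

lemma sg_deriv_shift {S : ℝ → (B →L[ℝ] B)} (hS : IsC0Semigroup S) {x y : B}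
    (h : DerivAtZero S x y) {r : ℝ} (hr : 0 ≤ r) : DerivAtZero S (S r x) (S r y) := by
  rw [derivAtZero_iff hS] at h ⊢
  refine (((S r).continuous.tendsto y).comp h).congr' ?_
  filter_upwards [self_mem_nhdsWithin] with u hu
  have hu : 0 < u := hu
  simp [sg_comm hS hr hu.le]

lemma sg_hasDeriv {S : ℝ → (B →L[ℝ] B)} (hS : IsC0Semigroup S) {x y : B}
    (h : DerivAtZero S x y) {r : ℝ} (hr : 0 ≤ r) :
    HasDerivWithinAt (fun s => S s x) (S r y) (Set.Ici r) r := by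
  rw [← hasDerivWithinAt_Ioi_iff_Ici, hasDerivWithinAt_iff_tendsto_slope' (by simp)]
  have h2 := (derivAtZero_iff hS).1 (sg_deriv_shift hS h hr)
  have h3 : Tendsto (fun u : ℝ => u - r) (𝓝[>] r) (𝓝[>] 0) := by
    apply tendsto_nhdsWithin_of_tendsto_nhds_of_eventually_within
    · have : Tendsto (fun u : ℝ => u - r) (𝓝 r) (𝓝 (r - r)) := by
        exact (continuous_id.sub continuous_const).tendsto r
      rw [sub_self] at this
      exact this.mono_left nhdsWithin_le_nhds
    · filter_upwards [self_mem_nhdsWithin] with u hu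
      have : r < u := hu
      simpa using this
  refine (h2.comp h3).congr' ?_
  filter_upwards [self_mem_nhdsWithin] with u hu
  have hu : r < u := hu
  have : S (u - r) (S r x) = S u x := by
    have := hS.2.1 (u - r) r (by linarith) hr
    rw [sub_add_cancel] at this
    rw [this]; rfl
  simp [slope, this]

lemma sg_contOn {S : ℝ → (B →L[ℝ] B)} (hS : IsC0Semigroup S) (x : B) (T : ℝ) :
    ContinuousOn (fun s => S s x) (Set.Icc 0 T) :=
  (hS.2.2.1 x).mono Set.Icc_subset_Ici_self

lemma sg_tendsto_zero {S : ℝ → (B →L[ℝ] B)} (hS : IsC0Semigroup S) (x : B) :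
    Tendsto (fun s => S s x) (𝓝[>] 0) (𝓝 x) := by
  have h := (hS.2.2.1 x) 0 (by simp)
  have h' : Tendsto (fun s => S s x) (𝓝[≥] 0) (𝓝 (S 0 x)) := h
  rw [hS.1] at h'
  exact h'.mono_left (nhdsWithin_mono _ Set.Ioi_subset_Ici_self)

lemma scalar_ode {φ : ℝ → ℝ} {lam w K : ℝ} (hc : ContinuousOn φ (Set.Ici 0))
    (hd : ∀ r, 0 ≤ r → HasDerivWithinAt φ (lam * φ r) (Set.Ici r) r) (hlw : w < lam)
    (hb : ∀ r, 0 ≤ r → |φ r| ≤ K * Real.exp (w * r)) : φ 0 = 0 := by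
  have key : ∀ r, 0 ≤ r → Real.exp (-lam * r) * φ r = φ 0 := by
    intro r hr
    have := constant_of_has_deriv_right_zero (f := fun r => Real.exp (-lam * r) * φ r)
      (a := 0) (b := r) ?_ ?_ r ⟨hr, le_rfl⟩
    · simpa using this
    · exact ContinuousOn.mul (by fun_prop) (hc.mono Set.Icc_subset_Ici_self)
    · intro x hx
      have h1 : HasDerivWithinAt (fun r => Real.exp (-lam * r)) (Real.exp (-lam * x) * (-lam))
          (Set.Ici x) x := by
        have : HasDerivAt (fun r : ℝ => -lam * r) (-lam) x := by
          simpa using (hasDerivAt_id x).const_mul (-lam)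
        exact this.exp.hasDerivWithinAt
      exact (h1.mul (hd x hx.1)).congr_deriv (by ring)
  have hlim : Tendsto (fun r => K * Real.exp ((w - lam) * r)) atTop (𝓝 0) := by
    have : Tendsto (fun r => (w - lam) * r) atTop atBot :=
      tendsto_id.const_mul_atTop_of_neg (by linarith)
    simpa using (Real.tendsto_exp_atBot.comp this).const_mul K
  have : |φ 0| ≤ 0 := by
    refine ge_of_tendsto hlim ?_
    filter_upwards [eventually_ge_atTop 0] with r hr
    rw [← key r hr, abs_mul, abs_of_pos (Real.exp_pos _)]
    calc Real.exp (-lam * r) * |φ r| ≤ Real.exp (-lam * r) * (K * Real.exp (w * r)) := by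
          gcongr; exact hb r hr
      _ = K * Real.exp ((w - lam) * r) := by
          rw [mul_left_comm, ← Real.exp_add]; congr 2; ring
  simpa using this

lemma sg_inner_ode {S : ℝ → (B →L[ℝ] B)} (hS : IsC0Semigroup S) {M w lam : ℝ}
    (hb : ∀ s : ℝ, 0 ≤ s → ‖S s‖ ≤ M * Real.exp (w * s)) (hl : w < lam) {x y g : B}
    (h : DerivAtZero S x y)
    (hg : ∀ r, 0 ≤ r → inner ℝ (S r y) g = lam * inner ℝ (S r x) g) : inner ℝ x g = 0 := by
  have := scalar_ode (φ := fun r => inner ℝ (S r x) g) (lam := lam) (w := w)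
    (K := M * ‖x‖ * ‖g‖) ?_ ?_ hl ?_
  · simpa [hS.1] using this
  · exact ContinuousOn.inner (𝕜 := ℝ) (hS.2.2.1 x) continuousOn_const
  · intro r hr
    have h1 := (sg_hasDeriv hS h hr).inner ℝ (hasDerivWithinAt_const r (Set.Ici r) g)
    rw [← hg r hr]
    simpa using h1
  · intro r hr
    calc |inner ℝ (S r x) g| ≤ ‖S r x‖ * ‖g‖ := abs_real_inner_le_norm _ _
      _ ≤ (M * Real.exp (w * r) * ‖x‖) * ‖g‖ := by
        gcongr
        exact (S r).le_of_opNorm_le (hb r hr) x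
      _ = _ := by ring

lemma sg_eig_zero {S : ℝ → (B →L[ℝ] B)} (hS : IsC0Semigroup S) {M w lam : ℝ}
    (hb : ∀ s : ℝ, 0 ≤ s → ‖S s‖ ≤ M * Real.exp (w * s)) (hl : w < lam) {x : B}
    (h : DerivAtZero S x (lam • x)) : x = 0 := by
  have := sg_inner_ode hS hb hl h (g := x) (fun r _ => by simp [inner_smul_left])
  simpa using this

lemma sg_unique {S T : ℝ → (B →L[ℝ] B)} (hS : IsC0Semigroup S) (hT : IsC0Semigroup T)
    {x : B} (h : ∀ r, 0 ≤ r → ∃ y, DerivAtZero S (T r x) y ∧ DerivAtZero T (T r x) y)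
    {s : ℝ} (hs : 0 ≤ s) : S s x = T s x := by
  obtain ⟨K, hK0, hK⟩ := sg_bdd hS s
  have hcont : ∀ r, r ∈ Set.Icc 0 s → ∀ (z : ℝ → B) (A : Set ℝ), A ⊆ Set.Icc 0 s →
      ∀ z0, Tendsto z (𝓝[A] r) (𝓝 z0) →
      Tendsto (fun u => S (s - u) (z u)) (𝓝[A] r) (𝓝 (S (s - r) z0)) := by
    intro r hr z A hA z0 hz
    have h1 : Tendsto (fun u => S (s - u) z0) (𝓝[A] r) (𝓝 (S (s - r) z0)) := by
      have : ContinuousOn (fun u => S (s - u) z0) (Set.Icc 0 s) := by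
        refine (hS.2.2.1 z0).comp (f := fun u => s - u) (by fun_prop) ?_
        intro u hu
        simpa using hu.2
      exact (this r hr).mono_left (nhdsWithin_mono _ hA)
    have h2 : Tendsto (fun u => S (s - u) (z u - z0)) (𝓝[A] r) (𝓝 0) := by
      have h3 : Tendsto (fun u => K * ‖z u - z0‖) (𝓝[A] r) (𝓝 0) := by
        have := (hz.sub_const z0).norm.const_mul K
        simpa using this
      refine squeeze_zero_norm' ?_ h3
      filter_upwards [self_mem_nhdsWithin] with u hu
      exact (S (s - u)).le_of_opNorm_le
        (hK _ (by linarith [(hA hu).2]) (by linarith [(hA hu).1])) _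
    simpa using h2.add h1
  have := constant_of_has_deriv_right_zero (f := fun r => S (s - r) (T r x)) (a := 0) (b := s)
    ?_ ?_ s ⟨hs, le_rfl⟩
  · simpa [hS.1, hT.1] using this.symm
  · intro r hr
    exact hcont r hr _ _ subset_rfl _ (sg_contOn hT x s r hr)
  · intro r hr
    obtain ⟨y, hy1, hy2⟩ := h r hr.1
    rw [derivAtZero_iff hS] at hy1
    rw [derivAtZero_iff hT] at hy2
    have h0 := hy2.sub hy1
    rw [sub_self] at h0
    rw [← hasDerivWithinAt_Ioi_iff_Ici, hasDerivWithinAt_iff_tendsto_slope' (by simp)]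
    have h3 : Tendsto (fun u : ℝ => u - r) (𝓝[Set.Ioc r s] r) (𝓝[>] 0) := by
      apply tendsto_nhdsWithin_of_tendsto_nhds_of_eventually_within
      · have : Tendsto (fun u : ℝ => u - r) (𝓝 r) (𝓝 (r - r)) := by
          exact (continuous_id.sub continuous_const).tendsto r
        rw [sub_self] at this
        exact this.mono_left nhdsWithin_le_nhds
      · filter_upwards [self_mem_nhdsWithin] with u hu
        have : r < u := hu.1
        simpa using this
    have h4 := hcont r ⟨hr.1, hr.2.le⟩ _ (Set.Ioc r s)
      (fun u hu => ⟨hr.1.trans hu.1.le, hu.2⟩) _ (h0.comp h3)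
    rw [← nhdsWithin_Ioc_eq_nhdsGT hr.2]
    rw [map_zero] at h4
    refine h4.congr' ?_
    filter_upwards [self_mem_nhdsWithin] with u hu
    have e1 : T (u - r) (T r x) = T u x := by
      have := hT.2.1 (u - r) r (by linarith [hu.1]) hr.1
      rw [sub_add_cancel] at this
      rw [this]; rfl
    have e2 : S (s - u) (S (u - r) (T r x)) = S (s - r) (T r x) := by
      have := hS.2.1 (s - u) (u - r) (by linarith [hu.2]) (by linarith [hu.1])
      rw [show s - u + (u - r) = s - r by ring] at this
      rw [this]; rfl
    simp only [Function.comp, slope, vsub_eq_sub, e1]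
    rw [← smul_sub, map_smul, map_sub, map_sub, map_sub, e2]
    congr 1
    abel

lemma adj_est {S : ℝ → (B →L[ℝ] B)} (hS : IsC0Semigroup S)
    (hd : Dense {x | ∃ y, DerivAtZero S x y}) {g gs : B}
    (hg : ∀ x y, DerivAtZero S x y → inner ℝ y g = inner ℝ x gs) {r ε : ℝ} {v : B}
    (hr : 0 ≤ r)
    (hε : ∀ ρ, 0 ≤ ρ → ρ ≤ r → ‖ContinuousLinearMap.adjoint (S ρ) gs - v‖ ≤ ε) :
    ‖ContinuousLinearMap.adjoint (S r) g - g - r • v‖ ≤ ε * r := by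
  have hε0 : 0 ≤ ε := (norm_nonneg _).trans (hε 0 le_rfl hr)
  set q := ContinuousLinearMap.adjoint (S r) g - g - r • v with hq
  have key : ∀ x : B, |inner ℝ x q| ≤ (ε * r) * ‖x‖ := by
    have hcl : IsClosed {x : B | |inner ℝ x q| ≤ (ε * r) * ‖x‖} :=
      isClosed_le (by fun_prop) (by fun_prop)
    intro x
    have hsub : {x | ∃ y, DerivAtZero S x y} ⊆ {x : B | |inner ℝ x q| ≤ (ε * r) * ‖x‖} := by
      rintro x ⟨y, hxy⟩
      have := norm_image_sub_le_of_norm_deriv_right_le_segment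
        (f := fun ρ => inner ℝ (S ρ x) g - ρ * inner ℝ x v) (a := 0) (b := r)
        (f' := fun ρ => inner ℝ (S ρ y) g - 1 * inner ℝ x v) (C := ε * ‖x‖) ?_ ?_ ?_ r ⟨hr, le_rfl⟩
      · simp only [hS.1, zero_mul, sub_zero] at this
        have e : inner ℝ x q = inner ℝ (S r x) g - r * inner ℝ x v - inner ℝ x g := by
          rw [hq, inner_sub_right, inner_sub_right, ContinuousLinearMap.adjoint_inner_right,
            inner_smul_right]
          ring
        simp only [Set.mem_setOf_eq]
        rw [e]
        simp only [Real.norm_eq_abs, ContinuousLinearMap.one_apply] at this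
        linarith
      · refine ContinuousOn.sub ?_ (by fun_prop)
        exact ContinuousOn.inner (𝕜 := ℝ) (sg_contOn hS x r) continuousOn_const
      · intro ρ hρ
        refine HasDerivWithinAt.sub ?_ ?_
        · simpa using (sg_hasDeriv hS hxy hρ.1).inner ℝ (hasDerivWithinAt_const ρ (Set.Ici ρ) g)
        · exact ((hasDerivAt_id ρ).mul_const _).hasDerivWithinAt
      · intro ρ hρ
        rw [hg _ _ (sg_deriv_shift hS hxy hρ.1)]
        have e : inner ℝ (S ρ x) gs - 1 * inner ℝ x v
            = inner ℝ x (ContinuousLinearMap.adjoint (S ρ) gs - v) := by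
          rw [inner_sub_right, ContinuousLinearMap.adjoint_inner_right]; ring
        rw [e]
        refine (norm_inner_le_norm _ _).trans ?_
        rw [mul_comm]
        gcongr
        exact hε ρ hρ.1 hρ.2.le
    exact hcl.closure_subset_iff.2 hsub (hd x)
  have h1 := key q
  rw [real_inner_self_eq_norm_sq, abs_of_nonneg (by positivity), sq] at h1
  by_cases hq0 : ‖q‖ = 0
  · rw [hq0]; positivity
  · exact le_of_mul_le_mul_right h1 (lt_of_le_of_ne (norm_nonneg _) (Ne.symm hq0))

lemma adj_cont {S : ℝ → (B →L[ℝ] B)} (hS : IsC0Semigroup S)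
    (hd : Dense {x | ∃ y, DerivAtZero S x y})
    (hE : Dense {g : B | ∃ gs, ∀ x y, DerivAtZero S x y → inner ℝ y g = inner ℝ x gs}) (v : B) :
    Tendsto (fun r => ContinuousLinearMap.adjoint (S r) v) (𝓝[>] 0) (𝓝 v) := by
  obtain ⟨K, hK0, hK⟩ := sg_bdd hS 1
  have hI : ∀ᶠ r : ℝ in 𝓝[>] 0, 0 < r ∧ r < 1 := Ioo_mem_nhdsGT one_pos
  have := clm_tendsto_zero (l := 𝓝[>] (0 : ℝ))
    (fun r => ContinuousLinearMap.adjoint (S r) - 1) (K + 1) ?_ _ hE ?_ v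
  · simpa using this.add_const v
  · filter_upwards [hI] with r hr
    refine (norm_sub_le _ _).trans ?_
    gcongr
    · rw [LinearIsometryEquiv.norm_map]
      exact hK r hr.1.le hr.2.le
    · exact ContinuousLinearMap.norm_id_le
  · rintro g ⟨gs, hg⟩
    have hz : Tendsto (fun r : ℝ => (K * ‖gs‖) * r) (𝓝[>] 0) (𝓝 0) := by
      have : Tendsto (fun r : ℝ => (K * ‖gs‖) * r) (𝓝 0) (𝓝 ((K * ‖gs‖) * 0)) :=
        (continuous_const.mul continuous_id).tendsto 0
      rw [mul_zero] at this
      exact this.mono_left nhdsWithin_le_nhds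
    refine squeeze_zero_norm' ?_ hz
    filter_upwards [hI] with r hr
    have := adj_est hS hd hg hr.1.le (v := 0) (ε := K * ‖gs‖) ?_
    · simpa using this
    · intro ρ h0 h1
      rw [sub_zero]
      refine ContinuousLinearMap.le_of_opNorm_le _ ?_ _
      rw [LinearIsometryEquiv.norm_map]
      exact hK ρ h0 (h1.trans hr.2.le)

lemma adj_deriv {S : ℝ → (B →L[ℝ] B)} (hS : IsC0Semigroup S)
    (hd : Dense {x | ∃ y, DerivAtZero S x y})
    (hE : Dense {g : B | ∃ gs, ∀ x y, DerivAtZero S x y → inner ℝ y g = inner ℝ x gs}) {g gs : B}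
    (hg : ∀ x y, DerivAtZero S x y → inner ℝ y g = inner ℝ x gs) :
    Tendsto (fun r => r⁻¹ • (ContinuousLinearMap.adjoint (S r) g - g)) (𝓝[>] 0) (𝓝 gs) := by
  rw [Metric.tendsto_nhds]
  intro ε hε
  have h1 := Metric.tendsto_nhds.1 (adj_cont hS hd hE gs) (ε / 2) (by positivity)
  rw [eventually_nhdsWithin_iff, Metric.eventually_nhds_iff] at h1
  obtain ⟨δ, hδ, h1⟩ := h1
  filter_upwards [Ioo_mem_nhdsGT hδ] with r hr
  have := adj_est hS hd hg hr.1.le (v := gs) (ε := ε / 2) ?_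
  · rw [dist_eq_norm]
    have hr0 : r ≠ 0 := hr.1.ne'
    have e : r⁻¹ • (ContinuousLinearMap.adjoint (S r) g - g) - gs
        = r⁻¹ • (ContinuousLinearMap.adjoint (S r) g - g - r • gs) := by
      rw [smul_sub _ _ (r • gs), smul_smul, inv_mul_cancel₀ hr0, one_smul]
    rw [e, norm_smul, norm_inv, Real.norm_eq_abs, abs_of_pos hr.1]
    calc r⁻¹ * ‖ContinuousLinearMap.adjoint (S r) g - g - r • gs‖ ≤ r⁻¹ * (ε / 2 * r) := by
          have := hr.1
          gcongr
      _ = ε / 2 := by field_simp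
      _ < ε := by linarith
  · intro ρ h0 hρ
    rcases h0.eq_or_lt with h | h
    · rw [← h, hS.1]
      have : ContinuousLinearMap.adjoint (1 : B →L[ℝ] B) = 1 := star_one _
      rw [this]
      simp; positivity
    · rw [← dist_eq_norm]
      refine (h1 ?_ h).le
      rw [dist_zero_right, Real.norm_eq_abs, abs_of_pos h]
      exact hρ.trans_lt hr.2

lemma prod_adj_deriv {S T : ℝ → (B →L[ℝ] B)} (hS : IsC0Semigroup S) (hT : IsC0Semigroup T)
    (hd : Dense {x | ∃ y, DerivAtZero S x y}) (hd' : Dense {x | ∃ y, DerivAtZero T x y})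
    (hE : Dense {g : B | ∃ gs, ∀ x y, DerivAtZero S x y → inner ℝ y g = inner ℝ x gs})
    (hE' : Dense {g : B | ∃ gs, ∀ x y, DerivAtZero T x y → inner ℝ y g = inner ℝ x gs})
    {g gs gt : B}
    (hg : ∀ x y, DerivAtZero S x y → inner ℝ y g = inner ℝ x gs)
    (hg' : ∀ x y, DerivAtZero T x y → inner ℝ y g = inner ℝ x gt) :
    Tendsto (fun r => r⁻¹ • (ContinuousLinearMap.adjoint (S r * T r) g - g)) (𝓝[>] 0)
      (𝓝 (gs + gt)) := by
  obtain ⟨K, hK0, hK⟩ := sg_bdd hT 1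
  have h1 := adj_deriv hS hd hE hg
  have h2 := adj_deriv hT hd' hE' hg'
  have h3 := adj_cont hT hd' hE' gs
  have h4 : Tendsto (fun r => ContinuousLinearMap.adjoint (T r)
      (r⁻¹ • (ContinuousLinearMap.adjoint (S r) g - g) - gs)) (𝓝[>] 0) (𝓝 0) := by
    have hz := (h1.sub_const gs).norm.const_mul K
    rw [sub_self, norm_zero, mul_zero] at hz
    refine squeeze_zero_norm' ?_ hz
    have hI : ∀ᶠ r : ℝ in 𝓝[>] 0, 0 < r ∧ r < 1 := Ioo_mem_nhdsGT one_pos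
    filter_upwards [hI] with r hr
    refine ContinuousLinearMap.le_of_opNorm_le _ ?_ _
    rw [LinearIsometryEquiv.norm_map]
    exact hK r hr.1.le hr.2.le
  have h5 := (h4.add h3).add h2
  rw [zero_add] at h5
  refine h5.congr fun r => ?_
  have : ContinuousLinearMap.adjoint (S r * T r) g
    = ContinuousLinearMap.adjoint (T r) (ContinuousLinearMap.adjoint (S r) g) := by
    have : ContinuousLinearMap.adjoint (S r * T r) = ContinuousLinearMap.adjoint (T r) * ContinuousLinearMap.adjoint (S r) := star_mul _ _
    rw [this]; rfl
  rw [this]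
  simp only [map_sub, map_smul, smul_sub]
  abel

lemma prod_deriv {S T : ℝ → (B →L[ℝ] B)} (hS : IsC0Semigroup S) (hT : IsC0Semigroup T)
    {x y z : B} (h1 : DerivAtZero S x y) (h2 : DerivAtZero T x z) :
    Tendsto (fun r : ℝ => r⁻¹ • ((S r * T r) x - x)) (𝓝[>] 0) (𝓝 (y + z)) := by
  obtain ⟨K, hK0, hK⟩ := sg_bdd hS 1
  rw [derivAtZero_iff hS] at h1
  rw [derivAtZero_iff hT] at h2
  have h3 := sg_tendsto_zero hS z
  have h4 : Tendsto (fun r => S r (r⁻¹ • (T r x - x) - z)) (𝓝[>] 0) (𝓝 0) := by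
    have hz := (h2.sub_const z).norm.const_mul K
    rw [sub_self, norm_zero, mul_zero] at hz
    refine squeeze_zero_norm' ?_ hz
    have hI : ∀ᶠ r : ℝ in 𝓝[>] 0, 0 < r ∧ r < 1 := Ioo_mem_nhdsGT one_pos
    filter_upwards [hI] with r hr
    exact ContinuousLinearMap.le_of_opNorm_le _ (hK r hr.1.le hr.2.le) _
  have h5 := h1.add (h4.add h3)
  rw [zero_add] at h5
  refine h5.congr fun r => ?_
  simp only [map_sub, map_smul, smul_sub, ContinuousLinearMap.mul_apply]
  abel

lemma step_meas (q : ℕ → ℝ) (n : ℕ) : Measurable (fun s : ℝ => q ⌊(n : ℝ) * s⌋₊) :=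
  (measurable_from_nat (f := q)).comp (Nat.measurable_floor.comp (measurable_const_mul _))

lemma step_piece (q : ℕ → ℝ) {n : ℕ} (hn : 0 < n) (k : ℕ) :
    IntervalIntegrable (fun s : ℝ => q ⌊(n : ℝ) * s⌋₊) volume ((k : ℝ) / n) (((k + 1 : ℕ) : ℝ) / n) ∧
    ∫ s in ((k : ℝ) / n)..(((k + 1 : ℕ) : ℝ) / n), q ⌊(n : ℝ) * s⌋₊ = (n : ℝ)⁻¹ * q k := by
  have hn' : (0 : ℝ) < n := by exact_mod_cast hn
  have hle : (k : ℝ) / n ≤ ((k + 1 : ℕ) : ℝ) / n := by gcongr; simp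
  have hev : ∀ᵐ s : ℝ, s ∈ Set.uIoc ((k : ℝ) / n) (((k + 1 : ℕ) : ℝ) / n) →
      q k = q ⌊(n : ℝ) * s⌋₊ := by
    have : ∀ᵐ s : ℝ, s ≠ ((k + 1 : ℕ) : ℝ) / n := by
      simp [ae_iff]
    filter_upwards [this] with s hs hmem
    rw [Set.uIoc_of_le hle] at hmem
    congr 1
    symm
    have h1 := lt_of_le_of_ne hmem.2 hs
    have h0 := hmem.1
    rw [div_lt_iff₀ hn'] at h0
    rw [lt_div_iff₀ hn'] at h1
    rw [Nat.floor_eq_iff (by nlinarith [Nat.cast_nonneg (α := ℝ) k])]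
    push_cast at h1
    constructor <;> linarith
  constructor
  · refine (intervalIntegrable_const (c := q k)).congr_ae ?_
    rw [Filter.EventuallyEq, ae_restrict_iff' measurableSet_uIoc]
    exact hev
  · rw [← intervalIntegral.integral_congr_ae hev]
    simp only [intervalIntegral.integral_const, smul_eq_mul]
    push_cast
    field_simp
    ring

lemma step_int (q : ℕ → ℝ) {n : ℕ} (hn : 0 < n) (S : ℕ) :
    ∫ s in (0 : ℝ)..S, q ⌊(n : ℝ) * s⌋₊ = (n : ℝ)⁻¹ * ∑ k ∈ Finset.range (n * S), q k := by
  have hn' : (0 : ℝ) < n := by exact_mod_cast hn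
  have := intervalIntegral.sum_integral_adjacent_intervals (μ := volume)
    (f := fun s : ℝ => q ⌊(n : ℝ) * s⌋₊) (a := fun k : ℕ => (k : ℝ) / n) (n := n * S)
    (fun k _ => (step_piece q hn k).1)
  simp only [fun k => (step_piece q hn k).2] at this
  rw [← Finset.mul_sum] at this
  rw [this]
  congr 1
  · simp
  · push_cast; field_simp

lemma my_gronwall_step {φ δ : ℕ → ℝ} {h lam : ℝ} (hh : 0 ≤ h) (hl : 0 ≤ lam)
    (hφ : ∀ k, φ (k + 1) = (1 + h * lam) * φ k + h * δ k) (N : ℕ) :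
    |φ 0| ≤ |φ N| / (1 + h * lam) ^ N + h * ∑ k ∈ Finset.range N, |δ k| := by
  have hp : 1 ≤ 1 + h * lam := by nlinarith [mul_nonneg hh hl]
  induction N with
  | zero => simp
  | succ N ih =>
    have h1 : (1 + h * lam) * φ N = φ (N + 1) - h * δ N := by rw [hφ]; ring
    have h2 : (1 + h * lam) * |φ N| ≤ |φ (N + 1)| + h * |δ N| := by
      calc (1 + h * lam) * |φ N| = |(1 + h * lam) * φ N| := by
            rw [abs_mul, abs_of_pos (by linarith : 0 < 1 + h * lam)]
        _ ≤ |φ (N + 1)| + |h * δ N| := by rw [h1]; exact abs_sub _ _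
        _ = _ := by rw [abs_mul, abs_of_nonneg hh]
    have hpN : 1 ≤ (1 + h * lam) ^ (N + 1) := one_le_pow₀ hp
    have h3 : |φ N| / (1 + h * lam) ^ N ≤ |φ (N + 1)| / (1 + h * lam) ^ (N + 1) + h * |δ N| := by
      have e : |φ N| / (1 + h * lam) ^ N = ((1 + h * lam) * |φ N|) / (1 + h * lam) ^ (N + 1) := by
        rw [pow_succ]
        have : (1 + h * lam) ≠ 0 := by linarith
        field_simp
      rw [e]
      calc _ ≤ (|φ (N + 1)| + h * |δ N|) / (1 + h * lam) ^ (N + 1) := by gcongr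
        _ = |φ (N + 1)| / (1 + h * lam) ^ (N + 1) + h * |δ N| / (1 + h * lam) ^ (N + 1) := add_div _ _ _
        _ ≤ _ := by
          gcongr
          exact div_le_self (by positivity) hpN
    rw [Finset.sum_range_succ, mul_add]
    linarith

lemma tn_tendsto {t : ℝ} (ht : 0 < t) :
    Tendsto (fun n : ℕ => t / (n : ℝ)) atTop (𝓝[>] 0) := by
  apply tendsto_nhdsWithin_of_tendsto_nhds_of_eventually_within
  · exact tendsto_const_div_atTop_nhds_zero_nat t
  · filter_upwards [eventually_gt_atTop 0] with n hn
    have : (0 : ℝ) < n := by exact_mod_cast hn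
    exact div_pos ht this

lemma pow_comm_gen (P : B →L[ℝ] B) (h : ℝ) (k : ℕ) (f : B) :
    h⁻¹ • (P ((P ^ k) f) - (P ^ k) f) = (P ^ k) (h⁻¹ • (P f - f)) := by
  rw [map_smul, map_sub]
  congr 2
  have : P * P ^ k = P ^ k * P := by rw [← pow_succ, ← pow_succ']
  exact congrArg (fun T => T f) this

lemma pow_bd {b t : ℝ} (hb : 0 ≤ b) (ht : 0 < t) {n k : ℕ} {s : ℝ} (hs : 0 ≤ s)
    (hk : (k : ℝ) ≤ n * s) : (1 + b * (t / n)) ^ k ≤ Real.exp (b * t * s) := by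
  rcases Nat.eq_zero_or_pos n with h | h
  · subst h
    have : k = 0 := by
      have : (k : ℝ) ≤ 0 := by simpa using hk
      exact_mod_cast le_antisymm this (by positivity)
    subst this
    simp; positivity
  · have hn' : (0 : ℝ) < n := by exact_mod_cast h
    have h1 : 1 + b * (t / n) ≤ Real.exp (b * (t / n)) := by
      rw [add_comm]; exact Real.add_one_le_exp _
    calc (1 + b * (t / n)) ^ k ≤ Real.exp (b * (t / n)) ^ k := by gcongr
      _ = Real.exp (k * (b * (t / n))) := (Real.exp_nat_mul _ _).symm
      _ ≤ Real.exp ((n * s) * (b * (t / n))) := by gcongr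
      _ = _ := by congr 1; field_simp

lemma ratio_bd {b lam h : ℝ} (hb : 0 ≤ b) (hl : b < lam) (hh : 0 < h) (hh1 : h ≤ 1) :
    (1 + b * h) / (1 + h * lam) ≤ Real.exp (-((lam - b) / (1 + lam) * h)) := by
  have h1 : (1 + b * h) / (1 + h * lam) = 1 - (lam - b) * h / (1 + h * lam) := by
    have : 1 + h * lam ≠ 0 := by nlinarith
    field_simp; ring
  have h2 : (lam - b) / (1 + lam) * h ≤ (lam - b) * h / (1 + h * lam) := by
    rw [div_mul_eq_mul_div]
    apply div_le_div_of_nonneg_left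
    · nlinarith
    · nlinarith
    · nlinarith
  have := Real.add_one_le_exp (-((lam - b) / (1 + lam) * h))
  linarith

lemma delta_tendsto {F : ℝ → (B →L[ℝ] B)} {G : Submodule ℝ (B × B)} {M b h₀ t lam : ℝ}
    (hM : 1 ≤ M) (hb : 0 ≤ b) (hh₀ : 0 < h₀) (ht : 0 < t)
    (hF : ∀ h, 0 < h → h < h₀ → ∀ m, ‖F h ^ m‖ ≤ M * (1 + b * h) ^ m)
    (hG : ∀ p ∈ G, Tendsto (fun h : ℝ => h⁻¹ • (F h p.1 - p.1)) (𝓝[>] 0) (𝓝 p.2))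
    (hE : Dense {g : B | ∃ gs, (∀ p ∈ G, inner ℝ p.2 g = inner ℝ p.1 gs) ∧
      Tendsto (fun r => r⁻¹ • (ContinuousLinearMap.adjoint (F r) g - g)) (𝓝[>] 0) (𝓝 gs)})
    {f f' : B} (hf : (f, f') ∈ G) {g : B}
    (hg : ∀ p ∈ G, inner ℝ (lam • p.1 - p.2) g = 0) {s : ℝ} (hs : 0 ≤ s)
    (hfs : ∃ fs : ℕ → B × B, (∀ n, fs n ∈ G) ∧
      Tendsto (fun n : ℕ => ‖((F (t / n)) ^ ⌊(n : ℝ) * s⌋₊) f - (fs n).1‖) atTop (𝓝 0) ∧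
      ∃ R : ℝ, ∀ n : ℕ, ‖(fs n).2‖ ≤ R) :
    Tendsto (fun n : ℕ => inner ℝ ((t / n)⁻¹ • (F (t / n) (((F (t / n)) ^ ⌊(n : ℝ) * s⌋₊) f)
      - ((F (t / n)) ^ ⌊(n : ℝ) * s⌋₊) f) - lam • ((F (t / n)) ^ ⌊(n : ℝ) * s⌋₊) f) g)
      atTop (𝓝 0) := by
  obtain ⟨fs, hfs, h1, R, hR⟩ := hfs
  set u : ℕ → B := fun n => ((F (t / n)) ^ ⌊(n : ℝ) * s⌋₊) f with hu
  set A : ℕ → B := fun n => (t / n)⁻¹ • (F (t / n) (u n) - u n) with hA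
  have htn := tn_tendsto ht
  have hsmall : ∀ᶠ n : ℕ in atTop, 0 < t / (n : ℝ) ∧ t / (n : ℝ) < h₀ :=
    htn (Ioo_mem_nhdsGT hh₀)
  have hpow : ∀ᶠ n : ℕ in atTop, ‖(F (t / n)) ^ ⌊(n : ℝ) * s⌋₊‖ ≤ M * Real.exp (b * t * s) := by
    filter_upwards [hsmall] with n hn
    refine (hF _ hn.1 hn.2 _).trans ?_
    gcongr
    exact pow_bd hb ht hs (Nat.floor_le (by positivity))
  have hubd : ∀ᶠ n : ℕ in atTop, ‖u n‖ ≤ M * Real.exp (b * t * s) * ‖f‖ := by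
    filter_upwards [hpow] with n hn
    exact ContinuousLinearMap.le_of_opNorm_le _ hn _
  have hAbd : ∀ᶠ n : ℕ in atTop, ‖A n‖ ≤ M * Real.exp (b * t * s) * (‖f'‖ + 1) := by
    have := ((hG _ hf).comp htn).norm.eventually_lt_const (lt_add_one ‖f'‖)
    filter_upwards [hpow, this] with n hn hn2
    simp only [hA, hu, pow_comm_gen]
    exact ((ContinuousLinearMap.le_of_opNorm_le _ hn _)).trans (by gcongr; exact hn2.le)
  have hdiff : Tendsto (fun n => u n - (fs n).1) atTop (𝓝 0) := tendsto_zero_iff_norm_tendsto_zero.2 h1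
  -- weak convergence
  have hweak : Tendsto (fun n => inner ℝ (A n - (fs n).2) g) atTop (𝓝 0) := by
    refine clm_tendsto_zero (l := atTop) (fun n => innerSL ℝ (A n - (fs n).2))
      (M * Real.exp (b * t * s) * (‖f'‖ + 1) + R) ?_ _ hE ?_ g
    · filter_upwards [hAbd] with n hn
      rw [innerSL_apply_norm]
      exact (norm_sub_le _ _).trans (add_le_add hn (hR n))
    · rintro g' ⟨gs, hgs, hgt⟩
      have e : ∀ n, inner ℝ (A n - (fs n).2) g' =
          inner ℝ (u n) ((t / (n : ℝ))⁻¹ • (ContinuousLinearMap.adjoint (F (t / n)) g' - g') - gs)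
          + inner ℝ (u n - (fs n).1) gs := by
        intro n
        rw [inner_sub_left, hgs _ (hfs n), inner_sub_right, inner_smul_right, inner_sub_right,
          ContinuousLinearMap.adjoint_inner_right, inner_sub_left, hA]
        simp only [inner_smul_left, inner_sub_left]
        simp
      simp only [innerSL_apply_apply, e]
      have h2 : Tendsto (fun n : ℕ => inner ℝ (u n) ((t / (n : ℝ))⁻¹ •
          (ContinuousLinearMap.adjoint (F (t / n)) g' - g') - gs)) atTop (𝓝 0) := by
        have hz := ((hgt.comp htn).sub_const gs).norm.const_mul (M * Real.exp (b * t * s) * ‖f‖)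
        rw [sub_self, norm_zero, mul_zero] at hz
        refine squeeze_zero_norm' ?_ hz
        filter_upwards [hubd] with n hn
        refine (norm_inner_le_norm _ _).trans ?_
        gcongr
        exact le_rfl
      have h3 : Tendsto (fun n => inner ℝ (u n - (fs n).1) gs) atTop (𝓝 0) := by
        simpa using hdiff.inner (𝕜 := ℝ) (tendsto_const_nhds (x := gs))
      simpa using h2.add h3
  have h3 : Tendsto (fun n => inner ℝ (u n - (fs n).1) g) atTop (𝓝 0) := by
    simpa using hdiff.inner (𝕜 := ℝ) (tendsto_const_nhds (x := g))
  have h4 := hweak.sub (h3.const_mul lam)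
  rw [mul_zero, sub_zero] at h4
  refine h4.congr fun n => ?_
  have := hg _ (hfs n)
  simp only [inner_sub_left, inner_smul_left, RCLike.conj_to_real] at this ⊢
  have e2 : inner ℝ (A n) g = inner ℝ ((t / (n:ℝ))⁻¹ • (F (t / n) (((F (t / n)) ^ ⌊(n : ℝ) * s⌋₊) f)
      - ((F (t / n)) ^ ⌊(n : ℝ) * s⌋₊) f)) g := rfl
  simp only [inner_sub_left, inner_smul_left, RCLike.conj_to_real] at e2
  rw [e2]
  simp only [hu]
  linarith

lemma key_density {F : ℝ → (B →L[ℝ] B)} {G : Submodule ℝ (B × B)} {M b h₀ t lam : ℝ}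
    (hM : 1 ≤ M) (hb : 0 ≤ b) (hl : b < lam) (hh₀ : 0 < h₀) (ht : 0 < t)
    (hF : ∀ h, 0 < h → h < h₀ → ∀ m, ‖F h ^ m‖ ≤ M * (1 + b * h) ^ m)
    (hG : ∀ p ∈ G, Tendsto (fun h : ℝ => h⁻¹ • (F h p.1 - p.1)) (𝓝[>] 0) (𝓝 p.2))
    (hE : Dense {g : B | ∃ gs, (∀ p ∈ G, inner ℝ p.2 g = inner ℝ p.1 gs) ∧
      Tendsto (fun r => r⁻¹ • (ContinuousLinearMap.adjoint (F r) g - g)) (𝓝[>] 0) (𝓝 gs)})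
    {f f' : B} (hf : (f, f') ∈ G) {g : B}
    (hg : ∀ p ∈ G, inner ℝ (lam • p.1 - p.2) g = 0)
    (hfs : ∀ s : ℝ, 0 ≤ s → ∃ fs : ℕ → B × B, (∀ n, fs n ∈ G) ∧
      Tendsto (fun n : ℕ => ‖((F (t / n)) ^ ⌊(n : ℝ) * s⌋₊) f - (fs n).1‖) atTop (𝓝 0) ∧
      ∃ R : ℝ, ∀ n : ℕ, ‖(fs n).2‖ ≤ R) : inner ℝ f g = 0 := by
  set δ : ℕ → ℕ → ℝ := fun n k => inner ℝ ((t / n)⁻¹ • (F (t / n) (((F (t / n)) ^ k) f)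
      - ((F (t / n)) ^ k) f) - lam • ((F (t / n)) ^ k) f) g with hδ
  have htn := tn_tendsto ht
  have hsmall : ∀ᶠ n : ℕ in atTop, 0 < t / (n : ℝ) ∧ t / (n : ℝ) < min h₀ 1 :=
    htn (Ioo_mem_nhdsGT (lt_min hh₀ one_pos))
  have hint : ∀ S : ℕ, Tendsto (fun n : ℕ => ∫ s in (0 : ℝ)..S, |δ n ⌊(n : ℝ) * s⌋₊|) atTop (𝓝 0) := by
    intro S
    set K := M * Real.exp (b * t * S) with hK
    have := intervalIntegral.tendsto_integral_filter_of_dominated_convergence (μ := volume)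
      (a := 0) (b := (S : ℝ)) (l := atTop) (F := fun (n : ℕ) s => |δ n ⌊(n : ℝ) * s⌋₊|)
      (f := fun _ => (0 : ℝ))
      (fun _ => (K * (‖f'‖ + 1) + |lam| * (K * ‖f‖)) * ‖g‖) ?_ ?_ ?_ ?_
    · simpa using this
    · exact Eventually.of_forall fun n =>
        (step_meas (fun k => |δ n k|) n).aestronglyMeasurable
    · have := ((hG _ hf).comp htn).norm.eventually_lt_const (lt_add_one ‖f'‖)
      filter_upwards [hsmall, this] with n hn hn2
      refine Eventually.of_forall fun s hs => ?_
      rw [Set.uIoc_of_le (by positivity)] at hs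
      have hpow : ‖(F (t / n)) ^ ⌊(n : ℝ) * s⌋₊‖ ≤ K := by
        refine (hF _ hn.1 (hn.2.trans_le (min_le_left _ _)) _).trans ?_
        rw [hK]
        gcongr
        refine pow_bd hb ht (by positivity) ((Nat.floor_le ?_).trans ?_)
        · have := hs.1.le
          positivity
        · gcongr; exact hs.2
      simp only [Real.norm_eq_abs, abs_abs, hδ, pow_comm_gen]
      refine (abs_real_inner_le_norm _ _).trans ?_
      gcongr
      refine (norm_sub_le _ _).trans ?_
      rw [norm_smul, Real.norm_eq_abs]
      gcongr
      · exact ((ContinuousLinearMap.le_of_opNorm_le _ hpow _)).trans (by gcongr; exact hn2.le)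
      · exact ContinuousLinearMap.le_of_opNorm_le _ hpow _
    · exact intervalIntegrable_const
    · refine Eventually.of_forall fun s hs => ?_
      rw [Set.uIoc_of_le (by positivity)] at hs
      have := delta_tendsto hM hb hh₀ ht hF hG hE hf hg hs.1.le (hfs s hs.1.le)
      have h2 := this.abs
      rw [abs_zero] at h2
      exact h2
  set c := (lam - b) / (1 + lam) with hc
  have hc0 : 0 < c := div_pos (by linarith) (by linarith)
  have hbound : ∀ S : ℕ, |inner ℝ f g| ≤ Real.exp (-(c * t * S)) * (M * ‖f‖ * ‖g‖) := by
    intro S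
    have hlim := ((hint S).const_mul t).const_add (Real.exp (-(c * t * S)) * (M * ‖f‖ * ‖g‖))
    rw [mul_zero, add_zero] at hlim
    refine ge_of_tendsto hlim ?_
    filter_upwards [hsmall, eventually_gt_atTop 0] with n hn hn0
    have hn' : (0 : ℝ) < n := by exact_mod_cast hn0
    have hgr := my_gronwall_step (φ := fun k => inner ℝ (((F (t / n)) ^ k) f) g) (δ := δ n)
      (h := t / n) (lam := lam) hn.1.le (by linarith) ?_ (n * S)
    · rw [step_int (fun k => |δ n k|) hn0 S]
      simp only [pow_zero] at hgr
      have e1 : (1 : B →L[ℝ] B) f = f := rfl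
      rw [e1] at hgr
      refine hgr.trans ?_
      have e2 : t * ((n : ℝ)⁻¹ * ∑ k ∈ Finset.range (n * S), |δ n k|)
        = t / n * ∑ k ∈ Finset.range (n * S), |δ n k| := by ring
      rw [e2]
      gcongr
      have hp : (0 : ℝ) < 1 + t / n * lam := by
        have := mul_pos hn.1 (hb.trans_lt hl)
        linarith
      calc |inner ℝ (((F (t / n)) ^ (n * S)) f) g| / (1 + t / n * lam) ^ (n * S)
          ≤ ((M * (1 + b * (t / n)) ^ (n * S)) * ‖f‖ * ‖g‖) / (1 + t / n * lam) ^ (n * S) := by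
            gcongr
            refine (abs_real_inner_le_norm _ _).trans ?_
            gcongr
            exact ContinuousLinearMap.le_of_opNorm_le _
              (hF _ hn.1 (hn.2.trans_le (min_le_left _ _)) _) _
        _ = ((1 + b * (t / n)) / (1 + t / n * lam)) ^ (n * S) * (M * ‖f‖ * ‖g‖) := by
            rw [div_pow]; ring
        _ ≤ (Real.exp (-(c * (t / n)))) ^ (n * S) * (M * ‖f‖ * ‖g‖) := by
            gcongr
            exact ratio_bd hb hl hn.1 (hn.2.le.trans (min_le_right _ _))
        _ = _ := by
            rw [← Real.exp_nat_mul]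
            congr 2
            push_cast
            field_simp
    · intro k
      simp only [hδ]
      rw [pow_succ', ContinuousLinearMap.mul_apply]
      simp only [inner_sub_left, inner_smul_left, RCLike.conj_to_real]
      have := hn.1.ne'
      rw [mul_sub, ← mul_assoc, mul_inv_cancel₀ this]
      ring
  have hlim : Tendsto (fun S : ℕ => Real.exp (-(c * t * S)) * (M * ‖f‖ * ‖g‖)) atTop (𝓝 0) := by
    have : Tendsto (fun S : ℕ => -(c * t * S)) atTop atBot := by
      refine tendsto_neg_atTop_atBot.comp ?_
      exact tendsto_natCast_atTop_atTop.const_mul_atTop (mul_pos hc0 ht)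
    simpa using (Real.tendsto_exp_atBot.comp this).mul_const (M * ‖f‖ * ‖g‖)
  have := ge_of_tendsto hlim (Eventually.of_forall hbound)
  simpa using this

lemma neumann_inv (P : B →L[ℝ] B) {M q p : ℝ} (hM : 1 ≤ M) (hq : 0 < q) (hqp : q < p)
    (hP : ∀ m, ‖P ^ m‖ ≤ M * q ^ m) :
    ∃ Q : B →L[ℝ] B, (∀ x, Q (p • x - P x) = x) ∧ (∀ x, p • Q x - P (Q x) = x) ∧
      ∀ n, ‖Q ^ n‖ ≤ M / (p - q) ^ n := by
  have hp : 0 < p := hq.trans hqp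
  have hsum : Summable (fun n : ℕ => (p⁻¹ • P) ^ n) := by
    refine Summable.of_norm_bounded (g := fun n : ℕ => M * (q / p) ^ n) ?_ ?_
    · refine (summable_geometric_of_lt_one (by positivity) ?_).mul_left M
      rwa [div_lt_one hp]
    · intro n
      rw [smul_pow, norm_smul, norm_pow, norm_inv, Real.norm_eq_abs, abs_of_pos hp, div_pow,
        div_eq_inv_mul, inv_pow]
      calc (p ^ n)⁻¹ * ‖P ^ n‖ ≤ (p ^ n)⁻¹ * (M * q ^ n) := by gcongr; exact hP n
        _ = _ := by ring
  set Q : B →L[ℝ] B := p⁻¹ • ∑' n : ℕ, (p⁻¹ • P) ^ n with hQ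
  have e0 : p • (1 - p⁻¹ • P) = p • (1 : B →L[ℝ] B) - P := by
    rw [smul_sub, smul_smul, mul_inv_cancel₀ hp.ne', one_smul]
  have hl : Q * (p • (1 : B →L[ℝ] B) - P) = 1 := by
    rw [← e0, hQ, smul_mul_smul_comm, hsum.tsum_pow_mul_one_sub, inv_mul_cancel₀ hp.ne', one_smul]
  have hr : (p • (1 : B →L[ℝ] B) - P) * Q = 1 := by
    rw [← e0, hQ, smul_mul_smul_comm, hsum.one_sub_mul_tsum_pow, mul_inv_cancel₀ hp.ne', one_smul]
  have hl' : ∀ x, Q (p • x - P x) = x := fun x => congrArg (fun T => T x) hl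
  have hr' : ∀ x, p • Q x - P (Q x) = x := fun x => congrArg (fun T => T x) hr
  refine ⟨Q, hl', hr', ?_⟩
  have step : ∀ (x : B) (c : ℝ), (∀ k, ‖(P ^ k) x‖ ≤ c * q ^ k) →
      ∀ k, ‖(P ^ k) (Q x)‖ ≤ (c / (p - q)) * q ^ k := by
    intro x c hc
    set m : ℕ → ℝ := fun k => ‖(P ^ k) (Q x)‖ / q ^ k with hm
    have hbdd : BddAbove (Set.range m) := by
      refine ⟨M * ‖Q x‖, ?_⟩
      rintro _ ⟨k, rfl⟩
      simp only [hm]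
      rw [div_le_iff₀ (by positivity)]
      refine (ContinuousLinearMap.le_of_opNorm_le _ (hP k) _).trans (le_of_eq (by ring))
    have h1 : ∀ k, m k ≤ (c + q * ⨆ k, m k) / p := by
      intro k
      rw [le_div_iff₀ hp]
      have h2 : q * m (k + 1) ≤ q * ⨆ k, m k := by
        gcongr; exact le_ciSup hbdd (k + 1)
      have h3 : p • (P ^ k) (Q x) = (P ^ k) x + (P ^ (k + 1)) (Q x) := by
        conv_rhs => rw [← hr' x]
        rw [pow_succ, map_sub, map_smul, ContinuousLinearMap.mul_apply, hr']
        abel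
      have h4 : p * ‖(P ^ k) (Q x)‖ ≤ c * q ^ k + ‖(P ^ (k + 1)) (Q x)‖ := by
        have := congrArg norm h3
        rw [norm_smul, Real.norm_eq_abs, abs_of_pos hp] at this
        rw [this]
        exact (norm_add_le _ _).trans (by gcongr; exact hc k)
      have h5 : m k * p ≤ c + q * m (k + 1) := by
        simp only [hm]
        have e : c + q * (‖(P ^ (k + 1)) (Q x)‖ / q ^ (k + 1))
          = (c * q ^ k + ‖(P ^ (k + 1)) (Q x)‖) / q ^ k := by
          rw [pow_succ]; field_simp; ring
        rw [e, div_mul_eq_mul_div]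
        gcongr
        linarith
      linarith
    have h2 := ciSup_le h1
    rw [le_div_iff₀ hp] at h2
    have h3 : (⨆ k, m k) ≤ c / (p - q) := by
      rw [le_div_iff₀ (by linarith)]; linarith
    intro k
    have := (le_ciSup hbdd k).trans h3
    simp only [hm] at this
    rwa [div_le_iff₀ (by positivity)] at this
  have pows : ∀ (n : ℕ) (x : B) (k : ℕ), ‖(P ^ k) ((Q ^ n) x)‖ ≤ (M * ‖x‖ / (p - q) ^ n) * q ^ k := by
    intro n x
    induction n with
    | zero =>
      intro k
      refine (ContinuousLinearMap.le_of_opNorm_le _ (hP k) _).trans (le_of_eq ?_)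
      simp; ring
    | succ n ih =>
      intro k
      have := step _ _ ih k
      rw [pow_succ', ContinuousLinearMap.mul_apply]
      refine this.trans (le_of_eq ?_)
      rw [pow_succ, div_div]
  intro n
  refine ContinuousLinearMap.opNorm_le_bound _ ?_ ?_
  · have : 0 < p - q := by linarith
    positivity
  · intro x
    have := pows n x 0
    simp only [pow_zero, mul_one] at this
    refine le_trans this (le_of_eq (by ring))

lemma resolvent_h {P : B →L[ℝ] B} {M b h lam : ℝ} (hM : 1 ≤ M) (hb : 0 ≤ b) (hl : b < lam)
    (hh : 0 < h) (hF : ∀ m, ‖P ^ m‖ ≤ M * (1 + b * h) ^ m) :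
    ∃ R : B →L[ℝ] B, (∀ x, R (lam • x - h⁻¹ • (P x - x)) = x) ∧
      (∀ x, lam • R x - h⁻¹ • (P (R x) - R x) = x) ∧ ∀ n, ‖R ^ n‖ ≤ M / (lam - b) ^ n := by
  obtain ⟨Q, h1, h2, h3⟩ := neumann_inv P (q := 1 + b * h) (p := 1 + lam * h) hM (by positivity)
    (by nlinarith) hF
  have e : ∀ x, lam • x - h⁻¹ • (P x - x) = h⁻¹ • ((1 + lam * h) • x - P x) := by
    intro x
    have : lam • x = h⁻¹ • (lam * h) • x := by
      rw [smul_smul]; congr 1; field_simp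
    rw [this, add_smul, one_smul, smul_sub, smul_sub, smul_add]
    abel
  refine ⟨h • Q, ?_, ?_, ?_⟩
  · intro x
    rw [e, ContinuousLinearMap.smul_apply, map_smul, smul_smul, mul_inv_cancel₀ hh.ne', one_smul, h1]
  · intro x
    rw [e, ContinuousLinearMap.smul_apply, map_smul, smul_comm _ h, ← smul_sub, smul_smul,
      inv_mul_cancel₀ hh.ne', one_smul, h2]
  · intro n
    rw [smul_pow, norm_smul, norm_pow, Real.norm_eq_abs, abs_of_pos hh]
    calc h ^ n * ‖Q ^ n‖ ≤ h ^ n * (M / ((1 + lam * h) - (1 + b * h)) ^ n) := by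
          gcongr; exact h3 n
      _ = _ := by
        rw [show (1 + lam * h) - (1 + b * h) = (lam - b) * h by ring, mul_pow]
        have : (lam - b) ^ n ≠ 0 := pow_ne_zero _ (by linarith)
        field_simp

lemma resolvent_lim {F : ℝ → (B →L[ℝ] B)} {G : Submodule ℝ (B × B)} {M b h₀ lam : ℝ}
    (hM : 1 ≤ M) (hb : 0 ≤ b) (hl : b < lam) (hh₀ : 0 < h₀)
    (hF : ∀ h, 0 < h → h < h₀ → ∀ m, ‖F h ^ m‖ ≤ M * (1 + b * h) ^ m)
    (hG : ∀ p ∈ G, Tendsto (fun h : ℝ => h⁻¹ • (F h p.1 - p.1)) (𝓝[>] 0) (𝓝 p.2))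
    (hD : Dense ((fun p : B × B => lam • p.1 - p.2) '' (G : Set (B × B)))) :
    ∃ (R : B →L[ℝ] B) (Rh : ℝ → (B →L[ℝ] B)),
      (∀ p ∈ G.topologicalClosure, R (lam • p.1 - p.2) = p.1) ∧
      (∀ y, (R y, lam • R y - y) ∈ G.topologicalClosure) ∧
      (∀ n, ‖R ^ n‖ ≤ M / (lam - b) ^ n) ∧
      (∀ h, 0 < h → h < h₀ → (∀ x, Rh h (lam • x - h⁻¹ • (F h x - x)) = x) ∧
        (∀ x, lam • Rh h x - h⁻¹ • (F h (Rh h x) - Rh h x) = x) ∧ ‖Rh h‖ ≤ M / (lam - b)) ∧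
      (∀ y, Tendsto (fun h => Rh h y) (𝓝[>] 0) (𝓝 (R y))) := by
  have hex : ∀ h, ∃ R : B →L[ℝ] B, 0 < h → h < h₀ → (∀ x, R (lam • x - h⁻¹ • (F h x - x)) = x) ∧
      (∀ x, lam • R x - h⁻¹ • (F h (R x) - R x) = x) ∧ ∀ n, ‖R ^ n‖ ≤ M / (lam - b) ^ n := by
    intro h
    by_cases hh : 0 < h ∧ h < h₀
    · obtain ⟨R, hR⟩ := resolvent_h hM hb hl hh.1 (hF h hh.1 hh.2)
      exact ⟨R, fun _ _ => hR⟩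
    · exact ⟨0, fun h1 h2 => absurd ⟨h1, h2⟩ hh⟩
  choose Rh hRh using hex
  have hI : ∀ᶠ h : ℝ in 𝓝[>] 0, 0 < h ∧ h < h₀ := Ioo_mem_nhdsGT hh₀
  have hK : 0 ≤ M / (lam - b) := div_nonneg (by linarith) (by linarith)
  have hRn : ∀ h, 0 < h → h < h₀ → ‖Rh h‖ ≤ M / (lam - b) := by
    intro h h1 h2
    simpa using (hRh h h1 h2).2.2 1
  have hconvG : ∀ p ∈ G, Tendsto (fun h => Rh h (lam • p.1 - p.2)) (𝓝[>] 0) (𝓝 p.1) := by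
    intro p hp
    have hz : Tendsto (fun h => Rh h (h⁻¹ • (F h p.1 - p.1) - p.2)) (𝓝[>] 0) (𝓝 0) := by
      have hz := ((hG p hp).sub_const p.2).norm.const_mul (M / (lam - b))
      rw [sub_self, norm_zero, mul_zero] at hz
      refine squeeze_zero_norm' ?_ hz
      filter_upwards [hI] with h hh
      exact ContinuousLinearMap.le_of_opNorm_le _ (hRn h hh.1 hh.2) _
    have h2 := hz.const_add p.1
    rw [add_zero] at h2
    refine h2.congr' ?_
    filter_upwards [hI] with h hh
    conv_lhs => enter [1]; rw [← (hRh h hh.1 hh.2).1 p.1]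
    rw [← map_add]
    congr 1
    abel
  have hconv : ∀ y, ∃ z, Tendsto (fun h => Rh h y) (𝓝[>] 0) (𝓝 z) := by
    intro y
    apply cauchy_map_iff_exists_tendsto.1
    rw [Metric.cauchy_iff]
    refine ⟨inferInstance, fun ε hε => ?_⟩
    obtain ⟨_, ⟨p, hp, rfl⟩, hxy⟩ := Metric.mem_closure_iff.1 (hD y) (ε / (4 * (M / (lam - b) + 1)))
      (by positivity)
    rw [dist_eq_norm] at hxy
    have h1 := Metric.tendsto_nhds.1 (hconvG p hp) (ε / 4) (by positivity)
    refine ⟨Metric.ball p.1 (ε / 2), ?_, ?_⟩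
    · show ∀ᶠ h in 𝓝[>] 0, Rh h y ∈ Metric.ball p.1 (ε / 2)
      filter_upwards [h1, hI] with h h1 hh
      rw [Metric.mem_ball]
      have h2 : dist (Rh h y) (Rh h (lam • p.1 - p.2)) ≤ ε / 4 := by
        rw [dist_eq_norm, ← map_sub]
        refine (ContinuousLinearMap.le_of_opNorm_le _ (hRn h hh.1 hh.2) _).trans ?_
        calc M / (lam - b) * ‖y - (lam • p.1 - p.2)‖
            ≤ (M / (lam - b) + 1) * (ε / (4 * (M / (lam - b) + 1))) := by gcongr; linarith
          _ = ε / 4 := by field_simp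
      linarith [dist_triangle (Rh h y) (Rh h (lam • p.1 - p.2)) p.1]
    · intro x hx y hy
      rw [Metric.mem_ball] at hx hy
      linarith [dist_triangle_right x y p.1]
  choose f hf using hconv
  set R : B →L[ℝ] B := continuousLinearMapOfTendsto (l := 𝓝[>] (0 : ℝ)) Rh (tendsto_pi_nhds.2 hf) with hR
  have hRf : ∀ y, Tendsto (fun h => Rh h y) (𝓝[>] 0) (𝓝 (R y)) := hf
  have hRG : ∀ p ∈ G, R (lam • p.1 - p.2) = p.1 := fun p hp =>
    tendsto_nhds_unique (hRf _) (hconvG p hp)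
  refine ⟨R, Rh, ?_, ?_, ?_, ?_, hRf⟩
  · intro p hp
    have hcl : IsClosed {p : B × B | R (lam • p.1 - p.2) = p.1} :=
      isClosed_eq (by fun_prop) (by fun_prop)
    exact hcl.closure_subset_iff.2 hRG hp
  · intro y
    have hcl : IsClosed {y : B | (R y, lam • R y - y) ∈ (G.topologicalClosure : Set (B × B))} :=
      G.isClosed_topologicalClosure.preimage (by fun_prop)
    refine hcl.closure_subset_iff.2 ?_ (hD y)
    rintro _ ⟨p, hp, rfl⟩
    simp only [Set.mem_setOf_eq, hRG p hp, sub_sub_cancel]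
    exact G.le_topologicalClosure hp
  · intro n
    refine ContinuousLinearMap.opNorm_le_bound _ ?_ ?_
    · have : 0 < lam - b := by linarith
      positivity
    intro x
    have hpow : ∀ n : ℕ, Tendsto (fun h => ((Rh h) ^ n) x) (𝓝[>] 0) (𝓝 ((R ^ n) x)) := by
      intro n
      induction n with
      | zero => simpa using tendsto_const_nhds
      | succ n ih =>
        have h1 : Tendsto (fun h => Rh h (((Rh h) ^ n) x - (R ^ n) x)) (𝓝[>] 0) (𝓝 0) := by
          have hz := (ih.sub_const ((R ^ n) x)).norm.const_mul (M / (lam - b))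
          rw [sub_self, norm_zero, mul_zero] at hz
          refine squeeze_zero_norm' ?_ hz
          filter_upwards [hI] with h hh
          exact ContinuousLinearMap.le_of_opNorm_le _ (hRn h hh.1 hh.2) _
        have h2 := h1.add (hRf ((R ^ n) x))
        rw [zero_add] at h2
        rw [pow_succ']
        refine h2.congr fun h => ?_
        rw [pow_succ', map_sub, ContinuousLinearMap.mul_apply]
        abel
    refine le_of_tendsto (hpow n).norm ?_
    filter_upwards [hI] with h hh
    exact ContinuousLinearMap.le_of_opNorm_le _ ((hRh h hh.1 hh.2).2.2 n) _
  · intro h h1 h2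
    exact ⟨(hRh h h1 h2).1, (hRh h h1 h2).2.1, hRn h h1 h2⟩

lemma exp_bd (R : B →L[ℝ] B) {M c τ : ℝ} (hτ : 0 ≤ τ) (hR : ∀ n, ‖R ^ n‖ ≤ M * c ^ n) :
    ‖NormedSpace.exp (τ • R)‖ ≤ M * Real.exp (τ * c) := by
  have h1 := NormedSpace.exp_series_hasSum_exp' (𝕂 := ℝ) (τ • R)
  have h2 := (NormedSpace.exp_series_hasSum_exp' (𝕂 := ℝ) (τ * c)).mul_left M
  rw [← Real.exp_eq_exp_ℝ] at h2
  refine h1.norm_le_of_bounded h2 fun n => ?_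
  rw [smul_pow, norm_smul, norm_smul, norm_inv, norm_pow, Real.norm_eq_abs, Real.norm_eq_abs,
    abs_of_nonneg hτ, abs_of_nonneg (by positivity : (0 : ℝ) ≤ (n.factorial : ℝ)), smul_eq_mul,
    mul_pow]
  calc _ ≤ (n.factorial : ℝ)⁻¹ * (τ ^ n * (M * c ^ n)) := by gcongr; exact hR n
    _ = _ := by ring

lemma yosida_bd (R : B →L[ℝ] B) {M b lam s : ℝ} (hb : 0 ≤ b) (hl : b < lam) (hl2 : 2 * b ≤ lam)
    (hM : 1 ≤ M) (hs : 0 ≤ s) (hR : ∀ n, ‖R ^ n‖ ≤ M / (lam - b) ^ n) :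
    ‖NormedSpace.exp (s • (lam ^ 2 • R - lam • (1 : B →L[ℝ] B)))‖ ≤ M * Real.exp (2 * b * s) := by
  letI : NormedAlgebra ℚ (B →L[ℝ] B) := NormedAlgebra.restrictScalars ℚ ℝ _
  have e : s • (lam ^ 2 • R - lam • (1 : B →L[ℝ] B))
      = algebraMap ℝ (B →L[ℝ] B) (-(s * lam)) + (s * lam ^ 2) • R := by
    rw [Algebra.algebraMap_eq_smul_one, smul_sub, smul_smul, smul_smul, neg_smul]
    abel
  rw [e, NormedSpace.exp_add_of_commute (Algebra.commutes _ _), ← NormedSpace.algebraMap_exp_comm,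
    Algebra.algebraMap_eq_smul_one, smul_mul_assoc, one_mul, norm_smul, ← Real.exp_eq_exp_ℝ,
    Real.norm_eq_abs, abs_of_pos (Real.exp_pos _)]
  have h1 := exp_bd R (M := M) (c := (lam - b)⁻¹) (τ := s * lam ^ 2) (by positivity)
    (fun n => by rw [inv_pow, ← div_eq_mul_inv]; exact hR n)
  have hpos : 0 < lam - b := by linarith
  calc _ ≤ Real.exp (-(s * lam)) * (M * Real.exp (s * lam ^ 2 * (lam - b)⁻¹)) := by gcongr
    _ = M * Real.exp (-(s * lam) + s * lam ^ 2 * (lam - b)⁻¹) := by rw [Real.exp_add]; ring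
    _ ≤ M * Real.exp (2 * b * s) := by
      gcongr
      have : -(s * lam) + s * lam ^ 2 * (lam - b)⁻¹ = s * (lam * b / (lam - b)) := by
        field_simp; ring
      rw [this]
      have h2 : lam * b / (lam - b) ≤ 2 * b := by
        rw [div_le_iff₀ hpos]; nlinarith
      nlinarith

lemma hy_cauchy {Y Y' : B →L[ℝ] B} (hc : Commute Y Y') {M w : ℝ} (hM : 1 ≤ M)
    (h1 : ∀ s : ℝ, 0 ≤ s → ‖NormedSpace.exp (s • Y)‖ ≤ M * Real.exp (w * s))
    (h2 : ∀ s : ℝ, 0 ≤ s → ‖NormedSpace.exp (s • Y')‖ ≤ M * Real.exp (w * s))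
    {s : ℝ} (hs : 0 ≤ s) (x : B) :
    ‖NormedSpace.exp (s • Y') x - NormedSpace.exp (s • Y) x‖ ≤
      M ^ 2 * Real.exp (w * s) * ‖Y' x - Y x‖ * s := by
  letI : NormedAlgebra ℚ (B →L[ℝ] B) := NormedAlgebra.restrictScalars ℚ ℝ _
  have hd : ∀ r : ℝ, HasDerivAt (fun r => (NormedSpace.exp ((s - r) • Y) * NormedSpace.exp (r • Y')) x)
      (NormedSpace.exp ((s - r) • Y) (NormedSpace.exp (r • Y') (Y' x - Y x))) r := by
    intro r
    have a1 : HasDerivAt (fun r : ℝ => NormedSpace.exp ((s - r) • Y))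
        ((-1 : ℝ) • (NormedSpace.exp ((s - r) • Y) * Y)) r :=
      (hasDerivAt_exp_smul_const (𝕂 := ℝ) Y (s - r)).scomp r
        (by simpa using (hasDerivAt_id r).const_sub s)
    have a2 := hasDerivAt_exp_smul_const (𝕂 := ℝ) Y' r
    have a3 := (a1.mul a2).clm_apply (hasDerivAt_const r x)
    refine a3.congr_deriv ?_
    have c1 : Y * NormedSpace.exp (r • Y') = NormedSpace.exp (r • Y') * Y :=
      ((hc.smul_right r).exp_right).eq
    rw [neg_one_smul, neg_mul, mul_assoc, c1]
    simp only [map_zero, add_zero, map_sub, ContinuousLinearMap.add_apply,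
      ContinuousLinearMap.neg_apply, ContinuousLinearMap.mul_apply]
    abel
  have := norm_image_sub_le_of_norm_deriv_right_le_segment
    (f := fun r => (NormedSpace.exp ((s - r) • Y) * NormedSpace.exp (r • Y')) x) (a := 0) (b := s)
    (f' := fun r => NormedSpace.exp ((s - r) • Y) (NormedSpace.exp (r • Y') (Y' x - Y x)))
    (C := M ^ 2 * Real.exp (w * s) * ‖Y' x - Y x‖)
    (fun r _ => (hd r).continuousAt.continuousWithinAt) (fun r _ => (hd r).hasDerivWithinAt) ?_
    s ⟨hs, le_rfl⟩
  · simpa using this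
  · intro r hr
    calc _ ≤ (M * Real.exp (w * (s - r))) * ((M * Real.exp (w * r)) * ‖Y' x - Y x‖) := by
          refine (ContinuousLinearMap.le_of_opNorm_le _ (h1 _ (by linarith [hr.2])) _).trans ?_
          gcongr
          exact ContinuousLinearMap.le_of_opNorm_le _ (h2 _ hr.1) _
      _ = M ^ 2 * (Real.exp (w * (s - r)) * Real.exp (w * r)) * ‖Y' x - Y x‖ := by ring
      _ = _ := by rw [← Real.exp_add]; congr 3; ring

lemma hy_abs {Y : ℕ → (B →L[ℝ] B)} (hc : ∀ n m, Commute (Y n) (Y m)) {M w : ℝ} (hM : 1 ≤ M)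
    (hw : 0 ≤ w)
    (hE : ∀ n, ∀ s : ℝ, 0 ≤ s → ‖NormedSpace.exp (s • Y n)‖ ≤ M * Real.exp (w * s))
    {Γ : Set (B × B)} (hdom : Dense (Prod.fst '' Γ))
    (hΓ : ∀ p ∈ Γ, Tendsto (fun n => Y n p.1) atTop (𝓝 p.2)) :
    ∃ S : ℝ → (B →L[ℝ] B), IsC0Semigroup S ∧ (∀ s, 0 ≤ s → ‖S s‖ ≤ M * Real.exp (w * s)) ∧
      ∀ p ∈ Γ, DerivAtZero S p.1 p.2 := by
  letI : NormedAlgebra ℚ (B →L[ℝ] B) := NormedAlgebra.restrictScalars ℚ ℝ _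
  have hUC : ∀ (x : B) (T : ℝ), 0 ≤ T →
      UniformCauchySeqOn (fun n s => NormedSpace.exp (s • Y n) x) atTop (Set.Icc 0 T) := by
    intro x T hT
    rw [Metric.uniformCauchySeqOn_iff]
    intro ε hε
    set L := M * Real.exp (w * T) with hL
    have hL0 : 0 < L := by positivity
    obtain ⟨_, ⟨p, hp, rfl⟩, hxy⟩ := Metric.mem_closure_iff.1 (hdom x) (ε / (4 * L)) (by positivity)
    rw [dist_eq_norm] at hxy
    have hcs := (hΓ p hp).cauchySeq
    rw [Metric.cauchySeq_iff] at hcs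
    obtain ⟨N, hN⟩ := hcs (ε / (4 * (M ^ 2 * Real.exp (w * T) * (T + 1)))) (by positivity)
    refine ⟨N, fun m hm n hn s hs => ?_⟩
    have hEL : ∀ n, ‖NormedSpace.exp (s • Y n)‖ ≤ L := by
      intro n
      refine (hE n s hs.1).trans ?_
      rw [hL]
      gcongr
      exact hs.2
    have b1 : ∀ n, ‖NormedSpace.exp (s • Y n) (x - p.1)‖ ≤ ε / 4 := by
      intro n
      refine (ContinuousLinearMap.le_of_opNorm_le _ (hEL n) _).trans ?_
      calc L * ‖x - p.1‖ ≤ L * (ε / (4 * L)) := by gcongr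
        _ = ε / 4 := by field_simp
    have b2 : ‖NormedSpace.exp (s • Y m) p.1 - NormedSpace.exp (s • Y n) p.1‖ ≤ ε / 4 := by
      refine (hy_cauchy (hc n m) hM (hE n) (hE m) hs.1 p.1).trans ?_
      have := (hN m hm n hn).le
      rw [dist_eq_norm] at this
      have hs1 := hs.1
      have hs2 := hs.2
      calc M ^ 2 * Real.exp (w * s) * ‖Y m p.1 - Y n p.1‖ * s
          ≤ M ^ 2 * Real.exp (w * T) * (ε / (4 * (M ^ 2 * Real.exp (w * T) * (T + 1)))) * (T + 1) := by
            gcongr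
            linarith
        _ = ε / 4 := by
            field_simp
    rw [dist_eq_norm]
    have e : NormedSpace.exp (s • Y m) x - NormedSpace.exp (s • Y n) x =
      NormedSpace.exp (s • Y m) (x - p.1) - NormedSpace.exp (s • Y n) (x - p.1) +
      (NormedSpace.exp (s • Y m) p.1 - NormedSpace.exp (s • Y n) p.1) := by
      simp only [map_sub]; abel
    rw [e]
    calc _ ≤ _ := norm_add_le _ _
      _ ≤ (ε / 4 + ε / 4) + ε / 4 := by
        gcongr
        exact (norm_sub_le _ _).trans (add_le_add (b1 m) (b1 n))
      _ < ε := by linarith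
  have hlim : ∀ (s : ℝ) (x : B), ∃ z,
      Tendsto (fun n => NormedSpace.exp ((max s 0) • Y n) x) atTop (𝓝 z) := by
    intro s x
    apply cauchySeq_tendsto_of_complete
    exact (hUC x (max s 0) (le_max_right _ _)).cauchySeq ⟨le_max_right _ _, le_rfl⟩
  choose Sf hSf using hlim
  set S : ℝ → (B →L[ℝ] B) := fun s => continuousLinearMapOfTendsto (l := atTop)
    (fun n => NormedSpace.exp ((max s 0) • Y n)) (tendsto_pi_nhds.2 (hSf s)) with hSdef
  have hS : ∀ s, 0 ≤ s → ∀ x, Tendsto (fun n => NormedSpace.exp (s • Y n) x) atTop (𝓝 (S s x)) := by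
    intro s hs x
    have := hSf s x
    rw [max_eq_left hs] at this
    exact this
  have hSbd : ∀ s, 0 ≤ s → ‖S s‖ ≤ M * Real.exp (w * s) := by
    intro s hs
    refine ContinuousLinearMap.opNorm_le_bound _ (by positivity) fun x => ?_
    exact le_of_tendsto (hS s hs x).norm (Eventually.of_forall fun n =>
      ContinuousLinearMap.le_of_opNorm_le _ (hE n s hs) _)
  have hTU : ∀ (x : B) (T : ℝ), 0 ≤ T →
      TendstoUniformlyOn (fun n s => NormedSpace.exp (s • Y n) x) (fun s => S s x) atTop
        (Set.Icc 0 T) := fun x T hT =>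
    (hUC x T hT).tendstoUniformlyOn_of_tendsto (fun s hs => hS s hs.1 x)
  have hdE : ∀ n x r, HasDerivAt (fun s : ℝ => NormedSpace.exp (s • Y n) x)
      (NormedSpace.exp (r • Y n) (Y n x)) r := by
    intro n x r
    have a3 := (hasDerivAt_exp_smul_const (𝕂 := ℝ) (Y n) r).clm_apply (hasDerivAt_const r x)
    refine a3.congr_deriv ?_
    simp
  have hcont : ∀ x, ContinuousOn (fun s => S s x) (Set.Ici 0) := by
    intro x s hs
    have hs : 0 ≤ s := hs
    have h1 : ContinuousOn (fun s => S s x) (Set.Icc 0 (s + 1)) :=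
      (hTU x (s + 1) (by linarith)).continuousOn (Eventually.of_forall fun n r _ =>
        (hdE n x r).continuousAt.continuousWithinAt).frequently
    refine (h1 s ⟨hs, by linarith⟩).mono_of_mem_nhdsWithin ?_
    rw [← Set.Ici_inter_Iic]
    exact inter_mem self_mem_nhdsWithin (mem_nhdsWithin_of_mem_nhds (Iic_mem_nhds (by linarith)))
  have hS0 : S 0 = 1 := by
    ext x
    refine tendsto_nhds_unique (hS 0 le_rfl x) ?_
    simp
  have hadd : ∀ a b : ℝ, 0 ≤ a → 0 ≤ b → S (a + b) = S a * S b := by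
    intro a b ha hb
    ext x
    refine tendsto_nhds_unique (hS (a + b) (by positivity) x) ?_
    have h1 : Tendsto (fun n => NormedSpace.exp (a • Y n) (NormedSpace.exp (b • Y n) x - S b x))
        atTop (𝓝 0) := by
      have hz := ((hS b hb x).sub_const (S b x)).norm.const_mul (M * Real.exp (w * a))
      rw [sub_self, norm_zero, mul_zero] at hz
      refine squeeze_zero_norm (fun n => ?_) hz
      exact ContinuousLinearMap.le_of_opNorm_le _ (hE n a ha) _
    have h2 := h1.add (hS a ha (S b x))
    rw [zero_add] at h2
    refine h2.congr fun n => ?_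
    rw [add_smul, NormedSpace.exp_add_of_commute
      (((Commute.refl (Y n)).smul_left a).smul_right b), map_sub, ContinuousLinearMap.mul_apply]
    abel
  have hSC : IsC0Semigroup S := ⟨hS0, hadd, hcont, M, hM, w, hSbd⟩
  refine ⟨S, hSC, hSbd, fun p hp => ?_⟩
  rw [derivAtZero_iff hSC, Metric.tendsto_nhds]
  intro ε hε
  have h1 := Metric.tendsto_nhds.1 (sg_tendsto_zero hSC p.2) (ε / 4) (by positivity)
  rw [eventually_nhdsWithin_iff, Metric.eventually_nhds_iff] at h1
  obtain ⟨δ, hδ, h1⟩ := h1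
  filter_upwards [Ioo_mem_nhdsGT (lt_min hδ one_pos)] with s hs
  have hs1 : s < δ := hs.2.trans_le (min_le_left _ _)
  have hs2 : s < 1 := hs.2.trans_le (min_le_right _ _)
  have hs0 : 0 < s := hs.1
  have hbound : ‖S s p.1 - p.1 - s • p.2‖ ≤ (3 * ε / 4) * s := by
    refine le_of_tendsto (((hS s hs0.le p.1).sub_const p.1).sub_const (s • p.2)).norm ?_
    have u1 := Metric.tendstoUniformlyOn_iff.1 (hTU p.2 1 zero_le_one) (ε / 4) (by positivity)
    have u2 := Metric.tendsto_nhds.1 (hΓ p hp) (ε / (4 * (M * Real.exp w))) (by positivity)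
    filter_upwards [u1, u2] with n u1 u2
    have := norm_image_sub_le_of_norm_deriv_right_le_segment
      (f := fun r : ℝ => NormedSpace.exp (r • Y n) p.1 - r • p.2) (a := 0) (b := s)
      (f' := fun r => NormedSpace.exp (r • Y n) (Y n p.1) - (1 : ℝ) • p.2)
      (C := 3 * ε / 4) ?_ ?_ ?_ s ⟨hs0.le, le_rfl⟩
    · have e : NormedSpace.exp (s • Y n) p.1 - p.1 - s • p.2
        = (NormedSpace.exp (s • Y n) p.1 - s • p.2) - p.1 := by abel
      rw [e]
      simpa using this
    · intro r _
      exact ((hdE n p.1 r).sub ((hasDerivAt_id r).smul_const p.2)).continuousAt.continuousWithinAt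
    · intro r _
      exact ((hdE n p.1 r).sub ((hasDerivAt_id r).smul_const p.2)).hasDerivWithinAt
    · intro r hr
      have hr1 : r < 1 := hr.2.trans hs2
      have t1 : ‖NormedSpace.exp (r • Y n) (Y n p.1 - p.2)‖ ≤ ε / 4 := by
        refine (ContinuousLinearMap.le_of_opNorm_le _ (hE n r hr.1) _).trans ?_
        rw [dist_eq_norm] at u2
        calc M * Real.exp (w * r) * ‖Y n p.1 - p.2‖
            ≤ M * Real.exp w * (ε / (4 * (M * Real.exp w))) := by
              gcongr
              nlinarith [hr.1]
          _ = ε / 4 := by field_simp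
      have t2 : ‖S r p.2 - NormedSpace.exp (r • Y n) p.2‖ ≤ ε / 4 := by
        have := (u1 r ⟨hr.1, hr1.le⟩).le
        rwa [dist_eq_norm] at this
      have t3 : ‖S r p.2 - p.2‖ ≤ ε / 4 := by
        rcases hr.1.eq_or_lt with h | h
        · rw [← h, hS0]; simp; positivity
        · rw [← dist_eq_norm]
          refine (h1 ?_ h).le
          rw [dist_zero_right, Real.norm_eq_abs, abs_of_pos h]
          exact hr.2.trans hs1
      have e : NormedSpace.exp (r • Y n) (Y n p.1) - (1 : ℝ) • p.2 =
        NormedSpace.exp (r • Y n) (Y n p.1 - p.2) - (S r p.2 - NormedSpace.exp (r • Y n) p.2)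
          + (S r p.2 - p.2) := by
        rw [map_sub, one_smul]; abel
      rw [e]
      calc _ ≤ _ := norm_add_le _ _
        _ ≤ (ε / 4 + ε / 4) + ε / 4 := by
          gcongr
          exact (norm_sub_le _ _).trans (add_le_add t1 t2)
        _ = _ := by ring
  rw [dist_eq_norm]
  have e : s⁻¹ • (S s p.1 - p.1) - p.2 = s⁻¹ • (S s p.1 - p.1 - s • p.2) := by
    rw [smul_sub _ _ (s • p.2), smul_smul, inv_mul_cancel₀ hs0.ne', one_smul]
  rw [e, norm_smul, norm_inv, Real.norm_eq_abs, abs_of_pos hs0]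
  calc s⁻¹ * ‖S s p.1 - p.1 - s • p.2‖ ≤ s⁻¹ * (3 * ε / 4 * s) := by gcongr
    _ = 3 * ε / 4 := by field_simp
    _ < ε := by linarith

lemma hy {Γ : Submodule ℝ (B × B)} (hdom : Dense (Prod.fst '' (Γ : Set (B × B)))) {M b : ℝ}
    (hM : 1 ≤ M) (hb : 0 ≤ b)
    (hR : ∀ lam, b < lam → ∃ R : B →L[ℝ] B, (∀ p ∈ Γ, R (lam • p.1 - p.2) = p.1) ∧
      (∀ y, (R y, lam • R y - y) ∈ Γ) ∧ ∀ n : ℕ, ‖R ^ n‖ ≤ M / (lam - b) ^ n) :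
    ∃ S : ℝ → (B →L[ℝ] B), IsC0Semigroup S ∧
      ∀ x y, DerivAtZero S x y ↔ (x, y) ∈ Γ := by
  choose! R hR1 hR2 hR3 using hR
  have hres : ∀ l m, b < l → b < m → R m - R l = (l - m) • (R l * R m) := by
    intro l m hl hm
    ext y
    have := hR1 l hl _ (hR2 m hm y)
    simp only [map_sub, map_smul] at this
    simp only [ContinuousLinearMap.sub_apply, ContinuousLinearMap.smul_apply,
      ContinuousLinearMap.mul_apply]
    have h2 : R m y = l • R l (R m y) - (m • R l (R m y) - R l y) := this.symm
    rw [sub_smul]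
    nth_rewrite 1 [h2]
    abel
  have hcomm : ∀ l m, b < l → b < m → Commute (R l) (R m) := by
    intro l m hl hm
    rcases eq_or_ne l m with rfl | hne
    · exact Commute.refl _
    have h1 := hres l m hl hm
    have h2 := hres m l hm hl
    have h3 : (l - m) • (R l * R m) = (l - m) • (R m * R l) := by
      rw [← h1, ← neg_sub (R l), h2, ← neg_smul]; congr 1; ring
    exact smul_right_injective _ (sub_ne_zero.2 hne) h3
  let lam : ℕ → ℝ := fun n => n + 2 * b + 1
  have hlam : ∀ n, b < lam n := fun n => by
    have : (0:ℝ) ≤ n := n.cast_nonneg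
    simp only [lam]; linarith
  have hlam2 : ∀ n, 2 * b ≤ lam n := fun n => by
    have : (0:ℝ) ≤ n := n.cast_nonneg
    simp only [lam]; linarith
  have hlim : Tendsto (fun n => lam n - b) atTop atTop := by
    have : (fun n => lam n - b) = fun n : ℕ => (n:ℝ) + (b + 1) := by
      ext n; simp only [lam]; ring
    rw [this]
    exact tendsto_atTop_add_const_right _ _ tendsto_natCast_atTop_atTop
  have hn1 : ∀ n, ‖R (lam n)‖ ≤ M / (lam n - b) := fun n => by
    simpa using hR3 _ (hlam n) 1
  have hid : ∀ y, Tendsto (fun n => (lam n • R (lam n) - 1 : B →L[ℝ] B) y) atTop (𝓝 0) := by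
    refine clm_tendsto_zero _ (2 * M + 1) (Eventually.of_forall fun n => ?_) _ hdom ?_
    · have h0 : 0 < lam n - b := sub_pos.2 (hlam n)
      have h1 : ‖lam n • R (lam n)‖ ≤ 2 * M := by
        rw [norm_smul, Real.norm_of_nonneg (by linarith)]
        calc lam n * ‖R (lam n)‖ ≤ (2 * (lam n - b)) * (M / (lam n - b)) := by
              gcongr
              · linarith [hlam2 n]
              · exact hn1 n
          _ = 2 * M := by field_simp
      have h2 : ‖(1 : B →L[ℝ] B)‖ ≤ 1 := ContinuousLinearMap.norm_id_le
      exact (norm_sub_le _ _).trans (add_le_add h1 h2)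
    · rintro _ ⟨p, hp, rfl⟩
      have e : ∀ n, (lam n • R (lam n) - 1 : B →L[ℝ] B) p.1 = R (lam n) p.2 := by
        intro n
        have := hR1 _ (hlam n) p hp
        simp only [map_sub, map_smul] at this
        simp only [ContinuousLinearMap.sub_apply, ContinuousLinearMap.smul_apply,
          ContinuousLinearMap.one_apply]
        nth_rewrite 2 [← this]
        abel
      simp_rw [e]
      refine squeeze_zero_norm (a := fun n => M / (lam n - b) * ‖p.2‖) (fun n => ?_) ?_
      · exact (R (lam n)).le_of_opNorm_le (hn1 n) _
      · have := (hlim.const_div_atTop M).mul_const ‖p.2‖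
        simpa using this
  obtain ⟨S, hS, hSb, hSd⟩ := hy_abs (Y := fun n => (lam n)^2 • R (lam n) - lam n • 1)
    (M := M) (w := 2 * b) (Γ := (Γ : Set (B × B))) (by
      intro n m
      have h := hcomm _ _ (hlam n) (hlam m)
      refine Commute.sub_left (Commute.sub_right ((h.smul_left _).smul_right _)
        ((Commute.one_right _).smul_right _)) ((Commute.one_left _).smul_left _))
    hM (by positivity) (fun n s hs => yosida_bd _ hb (hlam n) (hlam2 n) hM hs (hR3 _ (hlam n)))
    hdom (by
      intro p hp
      have h1 : ∀ n, ((lam n)^2 • R (lam n) - lam n • 1 : B →L[ℝ] B) p.1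
          = (lam n • R (lam n) - 1 : B →L[ℝ] B) p.2 + p.2 := by
        intro n
        have := hR1 _ (hlam n) p hp
        simp only [map_sub, map_smul] at this
        simp only [ContinuousLinearMap.sub_apply, ContinuousLinearMap.smul_apply,
          ContinuousLinearMap.one_apply]
        have h2 : lam n • R (lam n) p.1 - p.1 = R (lam n) p.2 := by
          nth_rewrite 2 [← this]
          abel
        rw [← h2, smul_sub, smul_smul, pow_two]; abel
      simp_rw [h1]
      simpa using (hid p.2).add_const p.2)
  refine ⟨S, hS, fun x y => ⟨fun h => ?_, fun h => hSd _ h⟩⟩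
  have hl : b < 2 * b + 1 := by linarith
  set l := 2 * b + 1
  have h1 := hSd _ (hR2 l hl (l • x - y))
  rw [derivAtZero_iff hS] at h h1
  have h2 := h.sub h1
  have hz : x - R l (l • x - y) = 0 := by
    refine sg_eig_zero hS hSb (lam := l) (by simp only [l]; linarith) ?_
    rw [derivAtZero_iff hS]
    have e : y - (l • R l (l • x - y) - (l • x - y)) = l • (x - R l (l • x - y)) := by
      rw [smul_sub]; abel
    simp only [e] at h2
    refine h2.congr fun r => ?_
    rw [map_sub (S r), ← smul_sub]
    congr 1
    abel
  have h3 := hR2 l hl (l • x - y)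
  rw [← sub_eq_zero.1 hz] at h3
  simpa using h3

lemma clm_unif {T : ℝ → (B →L[ℝ] B)} {l : Filter ℝ} {K : ℝ} (hK : ∀ᶠ h in l, ‖T h‖ ≤ K)
    (h : ∀ x, Tendsto (fun h => T h x) l (𝓝 0)) {s : Set B} (hs : IsCompact s) {ε : ℝ}
    (hε : 0 < ε) : ∀ᶠ h in l, ∀ x ∈ s, ‖T h x‖ ≤ ε := by
  obtain ⟨u, -, hu, hc⟩ := hs.finite_cover_balls (e := ε / (2 * (|K| + 1))) (by positivity)
  have h1 : ∀ᶠ h in l, ∀ y ∈ u, ‖T h y‖ < ε / 2 := by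
    rw [hu.eventually_all]
    intro y _
    have := Metric.tendsto_nhds.1 (h y) (ε / 2) (by positivity)
    simpa using this
  filter_upwards [hK, h1] with r hr1 hr2 x hx
  obtain ⟨y, hy, hxy⟩ := Set.mem_iUnion₂.1 (hc hx)
  rw [Metric.mem_ball, dist_eq_norm] at hxy
  have e : T r x = T r (x - y) + T r y := by simp
  have h3 : ‖T r (x - y)‖ ≤ (|K| + 1) * (ε / (2 * (|K| + 1))) := by
    refine ((T r).le_opNorm _).trans ?_
    gcongr
    linarith [le_abs_self K]
  have h4 : (|K| + 1) * (ε / (2 * (|K| + 1))) = ε / 2 := by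
    field_simp
  rw [e]
  have := hr2 y hy
  exact (norm_add_le _ _).trans (by linarith)

lemma sg_lip {S : ℝ → (B →L[ℝ] B)} (hS : IsC0Semigroup S) {K : ℝ}
    (hK : ∀ s, 0 ≤ s → s ≤ 1 → ‖S s‖ ≤ K) {x y : B} (h : DerivAtZero S x y) {r : ℝ}
    (hr : 0 ≤ r) (hr1 : r ≤ 1) : ‖S r x - x‖ ≤ K * ‖y‖ * r := by
  have := norm_image_sub_le_of_norm_deriv_right_le_segment (f := fun s => S s x)
    (f' := fun s => S s y) (a := 0) (b := r) (C := K * ‖y‖) (sg_contOn hS x r)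
    (fun s hs => sg_hasDeriv hS h hs.1)
    (fun s hs => (S s).le_of_opNorm_le (hK s hs.1 (hs.2.le.trans hr1)) _) r ⟨hr, le_rfl⟩
  simpa [hS.1] using this

lemma telescope {P Q R : B →L[ℝ] B} {S : ℝ → (B →L[ℝ] B)} (hS : IsC0Semigroup S) {h K ε : ℝ}
    (hh : 0 ≤ h) (hK : 0 ≤ K) (hε : 0 ≤ ε) {x : B} {N : ℕ} (hP : ∀ m, m ≤ N → ‖P ^ m‖ ≤ K)
    {V : B →L[ℝ] B} (hV : ∀ x, P (Q (R x)) - Q (R (S h x)) = h • V x)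
    (hVx : ∀ k, k ≤ N → ‖V (S (k * h) x)‖ ≤ ε) (k : ℕ) :
    ∀ m, m + k ≤ N →
      ‖(P ^ m) ((P ^ k) (Q (R x)) - Q (R (S (k * h) x)))‖ ≤ k * h * K * ε := by
  induction k with
  | zero => intro m _; simp [hS.1]
  | succ k ih =>
    intro m hm
    have e : S ((k + 1 : ℕ) * h) x = S h (S (k * h) x) := by
      have := hS.2.1 h (k * h) hh (by positivity)
      push_cast
      rw [show ((k:ℝ) + 1) * h = h + k * h by ring, this]
      rfl
    have e2 : (P ^ m) ((P ^ (k + 1)) (Q (R x)) - Q (R (S ((k + 1 : ℕ) * h) x)))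
        = (P ^ (m + 1)) ((P ^ k) (Q (R x)) - Q (R (S (k * h) x)))
          + h • (P ^ m) (V (S (k * h) x)) := by
      rw [e, ← map_smul, ← hV]
      rw [pow_succ' P k, pow_succ P m]
      change (P ^ m) (P ((P ^ k) (Q (R x))) - Q (R (S h (S (k * h) x))))
        = (P ^ m) (P ((P ^ k) (Q (R x)) - Q (R (S (k * h) x)))) + _
      rw [← map_add]
      congr 1
      rw [map_sub]; abel
    rw [e2]
    have h1 := ih (m + 1) (by omega)
    have h2 : ‖h • (P ^ m) (V (S (k * h) x))‖ ≤ h * (K * ε) := by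
      rw [norm_smul, Real.norm_of_nonneg hh]
      gcongr
      refine ((P ^ m).le_of_opNorm_le (hP m (by omega)) _).trans ?_
      gcongr
      exact hVx k (by omega)
    refine (norm_add_le _ _).trans ((add_le_add h1 h2).trans (le_of_eq ?_))
    push_cast; ring

lemma chernoff {F : ℝ → (B →L[ℝ] B)} {M b h₀ lam : ℝ}
    (hM : 1 ≤ M) (hb : 0 ≤ b) (hh₀ : 0 < h₀)
    (hF : ∀ h, 0 < h → h < h₀ → ∀ m, ‖F h ^ m‖ ≤ M * (1 + b * h) ^ m)
    {S : ℝ → (B →L[ℝ] B)} (hS : IsC0Semigroup S)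
    (hd : Dense {x | ∃ y, DerivAtZero S x y})
    {R : B →L[ℝ] B} {Rh : ℝ → (B →L[ℝ] B)}
    (hR1 : ∀ x y, DerivAtZero S x y → R (lam • x - y) = x)
    (hR2 : ∀ y, DerivAtZero S (R y) (lam • R y - y)) {K₀ : ℝ}
    (hRh : ∀ h, 0 < h → h < h₀ → 
      (∀ x, lam • Rh h x - h⁻¹ • (F h (Rh h x) - Rh h x) = x) ∧ ‖Rh h‖ ≤ K₀)
    (hlim : ∀ y, Tendsto (fun h => Rh h y) (𝓝[>] 0) (𝓝 (R y)))
    {T : ℝ} (hT : 0 ≤ T) (x : B) {ε : ℝ} (hε : 0 < ε) :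
    ∀ᶠ h in 𝓝[>] (0:ℝ), ∀ k : ℕ, k * h ≤ T → ‖(F h ^ k) x - S (k * h) x‖ ≤ ε := by
  have hsmall : ∀ᶠ h in 𝓝[>] (0:ℝ), 0 < h ∧ h < h₀ ∧ h ≤ 1 := by
    have := Ioo_mem_nhdsGT (lt_min hh₀ one_pos)
    filter_upwards [this] with h hh
    exact ⟨hh.1, hh.2.trans_le (min_le_left _ _), (hh.2.trans_le (min_le_right _ _)).le⟩
  have hcomm : ∀ r, 0 ≤ r → ∀ y, R (S r y) = S r (R y) := by
    intro r hr y
    have h1 := hR1 _ _ (sg_deriv_shift hS (hR2 y) hr)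
    rw [map_sub (S r), map_smul (S r)] at h1
    simpa using h1
  obtain ⟨K1, hK1, hSK1⟩ := sg_bdd hS 1
  obtain ⟨KT, hKT, hSKT⟩ := sg_bdd hS T
  have hFK : ∀ h, 0 < h → h < h₀ → ∀ k : ℕ, k * h ≤ T → ‖F h ^ k‖ ≤ M * Real.exp (b * T) := by
    intro h h1 h2 k hk
    refine (hF h h1 h2 k).trans ?_
    have : (1 + b * h) ^ k ≤ Real.exp (b * T) := by
      calc (1 + b * h) ^ k ≤ (Real.exp (b * h)) ^ k := by
            gcongr
            linarith [Real.add_one_le_exp (b * h)]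
        _ = Real.exp (b * (k * h)) := by rw [← Real.exp_nat_mul]; congr 1; ring
        _ ≤ _ := by gcongr
    gcongr
  set KF := M * Real.exp (b * T) with hKF
  have hKF0 : 0 < KF := by positivity
  have hK₀ : 0 ≤ K₀ := by
    have := (hRh (h₀ / 2) (by positivity) (by linarith)).2
    exact (norm_nonneg _).trans this
  let L : B →L[ℝ] B := lam • R - 1
  let W : ℝ → (B →L[ℝ] B) := fun h => h⁻¹ • (S h * R - R) - L
  let V : ℝ → (B →L[ℝ] B) := fun h => (Rh h - R) - Rh h * W h
  have hWlim : ∀ y, Tendsto (fun h => W h y) (𝓝[>] 0) (𝓝 0) := by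
    intro y
    have := ((derivAtZero_iff hS).1 (hR2 y)).sub_const (lam • R y - y)
    simpa [W, L] using this
  have hWb : ∀ h, 0 < h → h ≤ 1 → ‖W h‖ ≤ K1 * ‖L‖ + ‖L‖ := by
    intro h h1 h2
    refine (norm_sub_le _ _).trans (add_le_add ?_ le_rfl)
    refine ContinuousLinearMap.opNorm_le_bound _ (by positivity) fun y => ?_
    have h3 := sg_lip hS hSK1 (hR2 y) h1.le h2
    have h4 : ‖lam • R y - y‖ ≤ ‖L‖ * ‖y‖ := L.le_opNorm y
    change ‖h⁻¹ • (S h (R y) - R y)‖ ≤ _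
    rw [norm_smul, Real.norm_of_nonneg (by positivity)]
    calc h⁻¹ * ‖S h (R y) - R y‖ ≤ h⁻¹ * (K1 * (‖L‖ * ‖y‖) * h) := by
          gcongr
          refine h3.trans ?_
          gcongr
      _ = _ := by field_simp
  have hRRlim : ∀ y, Tendsto (fun h => (Rh h - R) y) (𝓝[>] 0) (𝓝 0) := by
    intro y
    simpa using (hlim y).sub_const (R y)
  have hVlim : ∀ y, Tendsto (fun h => V h y) (𝓝[>] 0) (𝓝 0) := by
    intro y
    have h2 : Tendsto (fun h => Rh h (W h y)) (𝓝[>] 0) (𝓝 0) := by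
      have h3 : Tendsto (fun h => K₀ * ‖W h y‖) (𝓝[>] 0) (𝓝 0) := by
        simpa using (hWlim y).norm.const_mul K₀
      refine squeeze_zero_norm' ?_ h3
      filter_upwards [hsmall] with h hh
      exact (Rh h).le_of_opNorm_le (hRh h hh.1 hh.2.1).2 _
    simpa [V] using (hRRlim y).sub h2
  have hRRb : ∀ h, 0 < h → h < h₀ → ‖Rh h - R‖ ≤ K₀ + ‖R‖ := fun h h1 h2 =>
    (norm_sub_le _ _).trans (add_le_add (hRh h h1 h2).2 le_rfl)
  have hVb : ∀ᶠ h in 𝓝[>] (0:ℝ), ‖V h‖ ≤ K₀ + ‖R‖ + K₀ * (K1 * ‖L‖ + ‖L‖) := by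
    filter_upwards [hsmall] with h hh
    refine (norm_sub_le _ _).trans (add_le_add (hRRb h hh.1 hh.2.1) ?_)
    refine (norm_mul_le _ _).trans ?_
    gcongr
    · exact (hRh h hh.1 hh.2.1).2
    · exact hWb h hh.1 hh.2.2
  have hVid : ∀ h, 0 < h → h < h₀ → ∀ x, F h (Rh h (R x)) - Rh h (R (S h x)) = h • V h x := by
    intro h h1 h2 x
    have e1 := (hRh h h1 h2).1 (R x)
    have e1' : F h (Rh h (R x)) = Rh h (R x) + h • (lam • Rh h (R x) - R x) := by
      have : h⁻¹ • (F h (Rh h (R x)) - Rh h (R x)) = lam • Rh h (R x) - R x := by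
        nth_rewrite 4 [← e1]; abel
      rw [← this, smul_inv_smul₀ h1.ne']; abel
    have e2 : R (S h x) = R x + h • (W h x + (lam • R x - x)) := by
      have : W h x + (lam • R x - x) = h⁻¹ • (S h (R x) - R x) := by
        simp [W, L]
      rw [this, smul_inv_smul₀ h1.ne', hcomm h h1.le]; abel
    rw [e1', e2]
    have e3 : V h x = Rh h x - R x - Rh h (W h x) := rfl
    rw [e3]
    simp only [map_add, map_smul, map_sub, smul_add, smul_sub]
    abel
  -- claim on the range of the square of the resolvent
  have main : ∀ x : B, ∀ ε > 0, ∀ᶠ h in 𝓝[>] (0:ℝ), ∀ k : ℕ, k * h ≤ T →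
      ‖(F h ^ k) (R (R x)) - S (k * h) (R (R x))‖ ≤ ε := by
    intro x ε hε
    have hcomp : IsCompact ((fun s => S s x) '' Set.Icc 0 T) :=
      isCompact_Icc.image_of_continuousOn (sg_contOn hS x T)
    have hcomp' := hcomp.image R.continuous
    have a1 := clm_unif hVb hVlim hcomp (ε := ε / (3 * (T * KF + 1))) (by positivity)
    have a2 := clm_unif (T := fun h => Rh h - R) (K := K₀ + ‖R‖)
      (by filter_upwards [hsmall] with h hh; exact hRRb h hh.1 hh.2.1) hRRlim hcomp' (ε := ε / 3)
      (by positivity)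
    have a3 : ∀ᶠ h in 𝓝[>] (0:ℝ), ‖(Rh h - R) (R x)‖ < ε / (3 * KF) := by
      have := Metric.tendsto_nhds.1 (hRRlim (R x)) (ε / (3 * KF)) (by positivity)
      simpa using this
    filter_upwards [hsmall, a1, a2, a3] with h hh b1 b2 b3 k hk
    have hle : ∀ j : ℕ, j ≤ k → (j : ℝ) * h ≤ T := fun j hj => by
      refine le_trans ?_ hk
      have : (j:ℝ) ≤ k := by exact_mod_cast hj
      have := hh.1.le
      gcongr
    have hmem : ∀ j : ℕ, j ≤ k → S (j * h) x ∈ (fun s => S s x) '' Set.Icc 0 T := fun j hj =>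
      ⟨j * h, ⟨mul_nonneg (by positivity) hh.1.le, hle j hj⟩, rfl⟩
    have c1 := telescope hS (P := F h) (Q := Rh h) (R := R) (V := V h) (x := x) (N := k)
      (K := KF) (ε := ε / (3 * (T * KF + 1)))
      hh.1.le hKF0.le (by positivity) (fun m hm => hFK h hh.1 hh.2.1 m (hle m hm))
      (hVid h hh.1 hh.2.1) (fun j hj => b1 _ (hmem j hj)) k 0 (by omega)
    have c1' : (k * h * KF * (ε / (3 * (T * KF + 1)))) ≤ ε / 3 := by
      calc k * h * KF * (ε / (3 * (T * KF + 1))) ≤ (T * KF + 1) * (ε / (3 * (T * KF + 1))) := by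
            gcongr
            have : k * h * KF ≤ T * KF := by gcongr
            linarith
        _ = ε / 3 := by field_simp
    have c2 := b2 _ ⟨_, hmem k le_rfl, rfl⟩
    have c3 : ‖(F h ^ k) ((Rh h - R) (R x))‖ ≤ ε / 3 := by
      refine ((F h ^ k).le_of_opNorm_le (hFK h hh.1 hh.2.1 k hk) _).trans ?_
      calc KF * ‖(Rh h - R) (R x)‖ ≤ KF * (ε / (3 * KF)) := by gcongr
        _ = ε / 3 := by field_simp
    have hkh : 0 ≤ (k:ℝ) * h := mul_nonneg (by positivity) hh.1.le
    have e : (F h ^ k) (R (R x)) - S (k * h) (R (R x)) =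
        (F h ^ 0) ((F h ^ k) (Rh h (R x)) - Rh h (R (S (k * h) x)))
        + (Rh h - R) (R (S (k * h) x)) - (F h ^ k) ((Rh h - R) (R x)) := by
      rw [← hcomm _ hkh, ← hcomm _ hkh]
      simp only [pow_zero, ContinuousLinearMap.one_apply, ContinuousLinearMap.sub_apply, map_sub]
      abel
    rw [e]
    refine (norm_sub_le _ _).trans ((add_le_add (norm_add_le _ _) le_rfl).trans ?_)
    linarith
  have hRd : DenseRange R := by
    refine hd.mono ?_
    rintro x ⟨y, hy⟩
    exact ⟨_, hR1 _ _ hy⟩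
  have hRRd : DenseRange (R ∘ R) := hRd.comp hRd R.continuous
  obtain ⟨_, ⟨z, rfl⟩, hz⟩ := Metric.mem_closure_iff.1 (hRRd x) (ε / (2 * (KF + KT))) (by positivity)
  rw [dist_eq_norm] at hz
  filter_upwards [hsmall, main z (ε / 2) (by positivity)] with h hh hm k hk
  have hkh : 0 ≤ (k:ℝ) * h := mul_nonneg (by positivity) hh.1.le
  have e : (F h ^ k) x - S (k * h) x = (F h ^ k) (x - R (R z)) - S (k * h) (x - R (R z))
      + ((F h ^ k) (R (R z)) - S (k * h) (R (R z))) := by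
    simp only [map_sub]; abel
  rw [e]
  have d1 := (F h ^ k).le_of_opNorm_le (hFK h hh.1 hh.2.1 k hk) (x - R (R z))
  have d2 := (S (k * h)).le_of_opNorm_le (hSKT _ hkh hk) (x - R (R z))
  have d3 : (KF + KT) * ‖x - R (R z)‖ ≤ ε / 2 := by
    calc (KF + KT) * ‖x - R (R z)‖ ≤ (KF + KT) * (ε / (2 * (KF + KT))) := by
          gcongr
          exact hz.le
      _ = ε / 2 := by field_simp
  refine (norm_add_le _ _).trans ((add_le_add (norm_sub_le _ _) (hm k hk)).trans ?_)
  linarith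

lemma perp_dense {A : Set B} (hA : Dense A) {g : B} (h : ∀ x ∈ A, inner ℝ x g = 0) : g = 0 := by
  have h1 : IsClosed {x : B | inner ℝ x g = 0} :=
    isClosed_eq (continuous_id.inner continuous_const) continuous_const
  have h2 : inner ℝ g g = (0:ℝ) := by
    have := closure_minimal (s := A) h h1
    exact this (hA g)
  exact inner_self_eq_zero.1 h2

lemma range_dense {G : Submodule ℝ (B × B)} {lam : ℝ}
    (h : ∀ g, (∀ p ∈ G, inner ℝ (lam • p.1 - p.2) g = 0) → g = 0) :
    Dense ((fun p : B × B => lam • p.1 - p.2) '' (G : Set (B × B))) := by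
  let φ : B × B →ₗ[ℝ] B := lam • LinearMap.fst ℝ B B - LinearMap.snd ℝ B B
  have e : ((fun p : B × B => lam • p.1 - p.2) '' (G : Set (B × B)))
      = ((G.map φ : Submodule ℝ B) : Set B) := by
    rw [Submodule.map_coe]; rfl
  rw [e, Submodule.dense_iff_topologicalClosure_eq_top, Submodule.topologicalClosure_eq_top_iff,
    Submodule.eq_bot_iff]
  intro g hg
  rw [Submodule.mem_orthogonal] at hg
  exact h g fun p hp => hg _ (Submodule.mem_map_of_mem (f := φ) hp)

lemma chernoff_seq {F S : ℝ → (B →L[ℝ] B)} (hS : IsC0Semigroup S) {x : B}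
    (hc : ∀ T : ℝ, 0 ≤ T → ∀ ε : ℝ, 0 < ε →
      ∀ᶠ h in 𝓝[>] (0:ℝ), ∀ k : ℕ, k * h ≤ T → ‖(F h ^ k) x - S (k * h) x‖ ≤ ε)
    {u : ℕ → ℝ} (hu : Tendsto u atTop (𝓝[>] 0)) {k : ℕ → ℕ} {τ : ℝ} (hτ : 0 ≤ τ)
    (hk : Tendsto (fun n => (k n : ℝ) * u n) atTop (𝓝 τ)) :
    Tendsto (fun n => (F (u n) ^ k n) x) atTop (𝓝 (S τ x)) := by
  have hpos : ∀ᶠ n in atTop, 0 < u n := hu.eventually self_mem_nhdsWithin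
  have h1 : Tendsto (fun n => S (k n * u n) x) atTop (𝓝 (S τ x)) := by
    refine (hS.2.2.1 x τ hτ).tendsto.comp (tendsto_nhdsWithin_iff.2 ⟨hk, ?_⟩)
    filter_upwards [hpos] with n hn
    exact mul_nonneg (by positivity) hn.le
  have h2 : Tendsto (fun n => (F (u n) ^ k n) x - S (k n * u n) x) atTop (𝓝 0) := by
    rw [Metric.tendsto_nhds]
    intro ε hε
    filter_upwards [hu.eventually (hc (τ + 1) (by linarith) (ε / 2) (by positivity)),
      hk.eventually (gt_mem_nhds (show τ < τ + 1 by linarith))] with n hn1 hn2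
    rw [dist_zero_right]
    have := hn1 (k n) hn2.le
    linarith
  simpa using h2.add h1

lemma floor_lim {t s : ℝ} (ht : 0 < t) (hs : 0 ≤ s) :
    Tendsto (fun n : ℕ => (⌊(n : ℝ) * s⌋₊ : ℝ) * (t / n)) atTop (𝓝 (t * s)) := by
  have h1 := (tendsto_nat_floor_mul_div_atTop hs).comp (tendsto_natCast_atTop_atTop (R := ℝ))
  have h2 := h1.const_mul t
  refine h2.congr fun n => ?_
  simp only [Function.comp]
  rw [mul_comm s]; ring

/-- Chernoff-type conclusion for a semigroup generated by the closure of `G`. -/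
lemma chernoff_G {F : ℝ → (B →L[ℝ] B)} {G : Submodule ℝ (B × B)} {M b h₀ lam : ℝ}
    (hM : 1 ≤ M) (hb : 0 ≤ b) (hl : b < lam) (hh₀ : 0 < h₀)
    (hF : ∀ h, 0 < h → h < h₀ → ∀ m, ‖F h ^ m‖ ≤ M * (1 + b * h) ^ m)
    (hG : ∀ p ∈ G, Tendsto (fun h : ℝ => h⁻¹ • (F h p.1 - p.1)) (𝓝[>] 0) (𝓝 p.2))
    (hdom : Dense (Prod.fst '' (G : Set (B × B))))
    (hD : Dense ((fun p : B × B => lam • p.1 - p.2) '' (G : Set (B × B))))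
    {S : ℝ → (B →L[ℝ] B)} (hS : IsC0Semigroup S)
    (hSG : ∀ x y, DerivAtZero S x y ↔ (x, y) ∈ G.topologicalClosure)
    {u : ℕ → ℝ} (hu : Tendsto u atTop (𝓝[>] 0)) {k : ℕ → ℕ} {τ : ℝ} (hτ : 0 ≤ τ)
    (hk : Tendsto (fun n => (k n : ℝ) * u n) atTop (𝓝 τ)) (x : B) :
    Tendsto (fun n => (F (u n) ^ k n) x) atTop (𝓝 (S τ x)) := by
  obtain ⟨R, Rh, r1, r2, -, r4, r5⟩ := resolvent_lim hM hb hl hh₀ hF hG hD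
  refine chernoff_seq hS (fun T hT ε hε => ?_) hu hτ hk
  refine chernoff hM hb hh₀ hF hS (hdom.mono ?_) (fun x y h => r1 _ ((hSG x y).1 h))
    (fun y => (hSG _ _).2 (r2 y)) (fun h h1 h2 => (r4 h h1 h2).2) r5 hT x hε
  rintro _ ⟨p, hp, rfl⟩
  exact ⟨p.2, (hSG _ _).2 (G.le_topologicalClosure hp)⟩

lemma dense_of_gen {G : Submodule ℝ (B × B)} (hdom : Dense (Prod.fst '' (G : Set (B × B))))
    {S : ℝ → (B →L[ℝ] B)} (hS : IsC0Semigroup S)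
    (hSG : ∀ x y, DerivAtZero S x y ↔ (x, y) ∈ G.topologicalClosure) (b : ℝ) :
    ∃ lam, b < lam ∧ Dense ((fun p : B × B => lam • p.1 - p.2) '' (G : Set (B × B))) := by
  obtain ⟨M, -, w, hw⟩ := hS.2.2.2
  refine ⟨max b w + 1, by linarith [le_max_left b w], range_dense fun g hg => ?_⟩
  set lam := max b w + 1
  have hg' : ∀ p ∈ G.topologicalClosure, inner ℝ (lam • p.1 - p.2) g = 0 := by
    have hc : IsClosed {p : B × B | inner ℝ (lam • p.1 - p.2) g = 0} :=
      isClosed_eq (by fun_prop) continuous_const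
    intro p hp
    exact closure_minimal (s := (G : Set (B × B))) hg hc hp
  refine perp_dense hdom ?_
  rintro _ ⟨p, hp, rfl⟩
  have hd : DerivAtZero S p.1 p.2 := (hSG _ _).2 (G.le_topologicalClosure hp)
  refine sg_inner_ode hS hw (lam := lam) (by linarith [le_max_right b w]) hd fun r hr => ?_
  have := hg' _ ((hSG _ _).1 (sg_deriv_shift hS hd hr))
  simp only [inner_sub_left, inner_smul_left] at this
  simp at this
  linarith

lemma gen_approx {F : ℝ → (B →L[ℝ] B)} {G : Submodule ℝ (B × B)} {M b h₀ : ℝ}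
    (hM : 1 ≤ M) (hb : 0 ≤ b) (hh₀ : 0 < h₀)
    (hF : ∀ h, 0 < h → h < h₀ → ∀ m, ‖F h ^ m‖ ≤ M * (1 + b * h) ^ m)
    (hG : ∀ p ∈ G, Tendsto (fun h : ℝ => h⁻¹ • (F h p.1 - p.1)) (𝓝[>] 0) (𝓝 p.2))
    (hdom : Dense (Prod.fst '' (G : Set (B × B))))
    {S : ℝ → (B →L[ℝ] B)} (hS : IsC0Semigroup S)
    (hSG : ∀ x y, DerivAtZero S x y ↔ (x, y) ∈ G.topologicalClosure)
    {t : ℝ} (ht : 0 < t) {f f' : B} (hf : (f, f') ∈ G) {s : ℝ} (hs : 0 ≤ s) :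
    ∃ fs : ℕ → B × B, (∀ n, fs n ∈ G) ∧
      Tendsto (fun n : ℕ => ‖((F (t / n)) ^ ⌊(n : ℝ) * s⌋₊) f - (fs n).1‖) atTop (𝓝 0) ∧
      ∃ R : ℝ, ∀ n : ℕ, ‖(fs n).2‖ ≤ R := by
  obtain ⟨lam, hl, hD⟩ := dense_of_gen hdom hS hSG b
  have h1 := chernoff_G hM hb hl hh₀ hF hG hdom hD hS hSG (tn_tendsto ht)
    (τ := t * s) (by positivity) (floor_lim ht hs) f
  have hd : DerivAtZero S f f' := (hSG _ _).2 (G.le_topologicalClosure hf)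
  have hm := (hSG _ _).1 (sg_deriv_shift hS hd (show 0 ≤ t * s by positivity))
  obtain ⟨fs, hfs, hlim⟩ := mem_closure_iff_seq_limit.1 hm
  refine ⟨fs, hfs, ?_, ?_⟩
  · have := (h1.sub ((continuous_fst.tendsto _).comp hlim)).norm
    simpa using this
  · have := ((continuous_snd.tendsto _).comp hlim).norm
    obtain ⟨R, hR⟩ := this.bddAbove_range
    exact ⟨R, fun n => hR ⟨n, rfl⟩⟩

lemma exp_le_lin {a h : ℝ} (ha : 0 < a) (hh : 0 < h) (hh1 : h < 1 / a) :
    Real.exp (a * h) ≤ 1 + 2 * a * h := by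
  have h1 : a * h ≤ 1 := by
    rw [lt_div_iff₀ ha] at hh1; linarith
  have h0 : 0 < a * h := by positivity
  have := abs_le.1 (Real.abs_exp_sub_one_sub_id_le (x := a * h) (by rw [abs_of_pos h0]; exact h1))
  nlinarith [this.2]

/-- Corollary 4: on a Hilbert space, a Trotter-type criterion with
boundedness of `(C+D)fₙ` for the closure of `C + D` to generate a `C₀`-semigroup, together
with the Trotter product formula. -/
theorem trotter_cor4 (t : ℝ) (ht : 0 < t)
    (SC SD : ℝ → (B →L[ℝ] B)) (hSC : IsC0Semigroup SC) (hSD : IsC0Semigroup SD)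
    (C D : B →ₗ.[ℝ] B) (hC : IsGeneratorOf SC C) (hD : IsGeneratorOf SD D)
    (h1 : Dense (((C + D).domain : Submodule ℝ B) : Set B))
    (h2 : Dense (((C.adjoint.domain ⊓ D.adjoint.domain : Submodule ℝ B)) : Set B))
    (h3 : ∃ a M : ℝ, 1 ≤ M ∧ ∀ n m : ℕ, 0 < n → 0 < m → ∀ s : ℝ, 0 < s →
      ‖(SC (s / n) * SD (s / n)) ^ m‖ ≤ M * Real.exp (a * s * m / n)) :
    (((C + D).IsClosable ∧
        ∃ S : ℝ → (B →L[ℝ] B), IsC0Semigroup S ∧ IsGeneratorOf S (C + D).closure) ↔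
      TrotterApproxBounded SC SD C D t) ∧
    (TrotterApproxBounded SC SD C D t →
      ∀ S : ℝ → (B →L[ℝ] B), IsC0Semigroup S → IsGeneratorOf S (C + D).closure →
        ∀ s : ℝ, 0 < s → ∀ f : B,
          Tendsto (fun n : ℕ => ((SC (s / n) * SD (s / n)) ^ n) f) atTop (𝓝 (S s f))) := by
  obtain ⟨a', M, hM, h3⟩ := h3
  obtain ⟨a, ha, haa⟩ : ∃ a : ℝ, 0 < a ∧ a' ≤ a :=
    ⟨|a'| + 1, by positivity, by linarith [le_abs_self a']⟩
  set F : ℝ → (B →L[ℝ] B) := fun h => SC h * SD h with hFdef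
  have hF : ∀ h, 0 < h → h < 1 / a → ∀ m, ‖F h ^ m‖ ≤ M * (1 + 2 * a * h) ^ m := by
    intro h hh hh1 m
    rcases Nat.eq_zero_or_pos m with rfl | hm
    · have : ‖(1 : B →L[ℝ] B)‖ ≤ 1 := ContinuousLinearMap.norm_id_le
      simpa using this.trans hM
    · have := h3 1 m one_pos hm h hh
      simp only [Nat.cast_one, div_one] at this
      refine this.trans ?_
      gcongr
      calc Real.exp (a' * h * m) ≤ Real.exp (m * (a * h)) := by
            rw [Real.exp_le_exp, mul_comm (m : ℝ)]; gcongr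
        _ = Real.exp (a * h) ^ m := by rw [Real.exp_nat_mul]
        _ ≤ _ := by gcongr; exact exp_le_lin ha hh hh1
  have hh₀ : 0 < 1 / a := by positivity
  have hb : 0 ≤ 2 * a := by positivity
  set G := (C + D).graph with hGdef
  have hGmem : ∀ p ∈ G, ∃ y z, DerivAtZero SC p.1 y ∧ DerivAtZero SD p.1 z ∧ p.2 = y + z := by
    intro p hp
    obtain ⟨x, hx1, hx2⟩ := (LinearPMap.mem_graph_iff _).1 hp
    have hx : (x : B) ∈ C.domain ⊓ D.domain := x.2
    refine ⟨C ⟨x, hx.1⟩, D ⟨x, hx.2⟩, ?_, ?_, ?_⟩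
    · rw [← hx1]; exact (hC _ _).2 ⟨hx.1, rfl⟩
    · rw [← hx1]; exact (hD _ _).2 ⟨hx.2, rfl⟩
    · rw [← hx2]; rfl
  have hG : ∀ p ∈ G, Tendsto (fun h : ℝ => h⁻¹ • (F h p.1 - p.1)) (𝓝[>] 0) (𝓝 p.2) := by
    intro p hp
    obtain ⟨y, z, hy, hz, e⟩ := hGmem p hp
    rw [e]
    exact prod_deriv hSC hSD hy hz
  have hdom : Dense (Prod.fst '' (G : Set (B × B))) := by
    refine h1.mono fun x hx => ⟨(x, (C + D) ⟨x, hx⟩), ?_, rfl⟩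
    exact (C + D).mem_graph ⟨x, hx⟩
  have hdC : Dense (C.domain : Set B) := h1.mono fun x hx => (show x ∈ C.domain ⊓ D.domain from hx).1
  have hdD : Dense (D.domain : Set B) := h1.mono fun x hx => (show x ∈ C.domain ⊓ D.domain from hx).2
  have hdC' : Dense {x | ∃ y, DerivAtZero SC x y} :=
    hdC.mono fun x hx => ⟨C ⟨x, hx⟩, (hC _ _).2 ⟨hx, rfl⟩⟩
  have hdD' : Dense {x | ∃ y, DerivAtZero SD x y} :=
    hdD.mono fun x hx => ⟨D ⟨x, hx⟩, (hD _ _).2 ⟨hx, rfl⟩⟩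
  have haC : ∀ g (hg : g ∈ C.adjoint.domain), ∀ x y, DerivAtZero SC x y →
      inner ℝ y g = inner ℝ x (C.adjoint ⟨g, hg⟩) := by
    intro g hg x y h
    obtain ⟨hx, rfl⟩ := (hC _ _).1 h
    exact (LinearPMap.adjoint_isFormalAdjoint hdC).symm ⟨x, hx⟩ ⟨g, hg⟩
  have haD : ∀ g (hg : g ∈ D.adjoint.domain), ∀ x y, DerivAtZero SD x y →
      inner ℝ y g = inner ℝ x (D.adjoint ⟨g, hg⟩) := by
    intro g hg x y h
    obtain ⟨hx, rfl⟩ := (hD _ _).1 h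
    exact (LinearPMap.adjoint_isFormalAdjoint hdD).symm ⟨x, hx⟩ ⟨g, hg⟩
  have hEC : Dense {g : B | ∃ gs, ∀ x y, DerivAtZero SC x y → inner ℝ y g = inner ℝ x gs} :=
    h2.mono fun g hg => ⟨_, haC g hg.1⟩
  have hED : Dense {g : B | ∃ gs, ∀ x y, DerivAtZero SD x y → inner ℝ y g = inner ℝ x gs} :=
    h2.mono fun g hg => ⟨_, haD g hg.2⟩
  have hE : Dense {g : B | ∃ gs, (∀ p ∈ G, inner ℝ p.2 g = inner ℝ p.1 gs) ∧
      Tendsto (fun r => r⁻¹ • (ContinuousLinearMap.adjoint (F r) g - g)) (𝓝[>] 0) (𝓝 gs)} := by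
    refine h2.mono fun g hg => ⟨C.adjoint ⟨g, hg.1⟩ + D.adjoint ⟨g, hg.2⟩, fun p hp => ?_,
      prod_adj_deriv hSC hSD hdC' hdD' hEC hED (haC g hg.1) (haD g hg.2)⟩
    obtain ⟨y, z, hy, hz, e⟩ := hGmem p hp
    rw [e, inner_add_left, inner_add_right, haC g hg.1 _ _ hy, haD g hg.2 _ _ hz]
  have hclos : (C + D).IsClosable := by
    refine ⟨G.topologicalClosure.toLinearPMap, (Submodule.toLinearPMap_graph_eq _ ?_).symm⟩
    intro p hp hp0
    refine perp_dense hE ?_ 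
    rintro g ⟨gs, hgs, -⟩
    have hc : IsClosed {p : B × B | inner ℝ p.2 g = inner ℝ p.1 gs} :=
      isClosed_eq (by fun_prop) (by fun_prop)
    have this : inner ℝ p.2 g = inner ℝ p.1 gs :=
      closure_minimal (s := (G : Set (B × B))) hgs hc hp
    rw [hp0, inner_zero_left] at this
    rw [real_inner_comm]; exact this
  have hgen : ∀ S : ℝ → (B →L[ℝ] B), IsGeneratorOf S (C + D).closure ↔
      ∀ x y, DerivAtZero S x y ↔ (x, y) ∈ G.topologicalClosure := by
    intro S
    unfold IsGeneratorOf
    have e : ∀ x y, (∃ hx : x ∈ (C + D).closure.domain, (C + D).closure ⟨x, hx⟩ = y) ↔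
        (x, y) ∈ G.topologicalClosure := by
      intro x y
      rw [hGdef, hclos.graph_closure_eq_closure_graph, LinearPMap.mem_graph_iff]
      constructor
      · rintro ⟨hx, h⟩; exact ⟨⟨x, hx⟩, rfl, h⟩
      · rintro ⟨⟨z, hz⟩, h, h'⟩
        obtain rfl : z = x := h
        exact ⟨hz, h'⟩
    simp_rw [e]
  have hback : TrotterApproxBounded SC SD C D t → ∀ lam, 2 * a < lam →
      Dense ((fun p : B × B => lam • p.1 - p.2) '' (G : Set (B × B))) := by
    rintro ⟨A, hA1, hA2, hA3⟩ lam hl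
    refine range_dense fun g hg => perp_dense hA2 fun f hf => ?_
    refine key_density hM hb hl hh₀ ht hF hG hE ((C + D).mem_graph ⟨f, hA1 hf⟩) hg fun s hs => ?_
    obtain ⟨fs, hfs1, R, hR⟩ := hA3 f hf s hs
    exact ⟨fun n => (fs n, (C + D) (fs n)), fun n => (C + D).mem_graph _, hfs1, R, hR⟩
  refine ⟨⟨?_, fun hT => ⟨hclos, ?_⟩⟩, ?_⟩
  · rintro ⟨-, S, hS, hSg⟩
    rw [hgen] at hSg
    refine ⟨(C + D).domain, subset_rfl, h1, fun f hf s hs => ?_⟩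
    obtain ⟨fs, hfs, hlim, R, hR⟩ := gen_approx hM hb hh₀ hF hG hdom hS hSg ht
      ((C + D).mem_graph ⟨f, hf⟩) hs
    choose gs hgs1 hgs2 using fun n => (LinearPMap.mem_graph_iff _).1 (hfs n)
    refine ⟨gs, ?_, R, fun n => by rw [hgs2]; exact hR n⟩
    simp_rw [hgs1]
    exact hlim
  · have hdom' : Dense (Prod.fst '' (G.topologicalClosure : Set (B × B))) :=
      hdom.mono (Set.image_mono G.le_topologicalClosure)
    obtain ⟨S, hS, hSg⟩ := hy hdom' hM hb fun lam hl => by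
      obtain ⟨R, Rh, r1, r2, r3, -, -⟩ := resolvent_lim hM hb hl hh₀ hF hG (hback hT lam hl)
      exact ⟨R, r1, r2, r3⟩
    exact ⟨S, hS, (hgen S).2 hSg⟩
  · intro hT S hS hSg s hs f
    rw [hgen] at hSg
    have hl : 2 * a < 2 * a + 1 := by linarith
    refine chernoff_G hM hb hl hh₀ hF hG hdom (hback hT _ hl) hS hSg (tn_tendsto hs) hs.le
      (k := fun n => n) ?_ f
    refine tendsto_const_nhds.congr' ?_
    filter_upwards [eventually_gt_atTop 0] with n hn
    have : (n:ℝ) ≠ 0 := by positivity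
    field_simp
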